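/- arXiv:1906.03743 — 9 statements merged into one kernel-verified Lean document; each statement's English description precedes it below -/
import Mathlib

section
/- Let n be a positive integer and f : {-1,1}^n → ℝ. For every nonzero ε with |ε| ≤ 1/√n, we have |(1/ε)·(E_ε[f] − E_0[f]) − ∑_{i=1}^n f̂({i})| ≤ |ε| · n · √(Var_0(f)), where Var_0(f) = E_0[f²] − (E_0[f])² = ∑_{S ≠ ∅} f̂(S)² is the variance of f under uniform random signs. -/
open Finset

/-- The real sign `±1` associated to a Boolean, encoding `{-1,1}`. -/
noncomputable def sgn (b : Bool) : ℝ := if b then 1 else -1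

/-- Fourier coefficient `f̂(S) = 2^{-n} ∑_x f(x) ∏_{i∈S} x_i` of `f : {-1,1}^n → ℝ`. -/
noncomputable def walshCoeff {n : ℕ} (f : (Fin n → Bool) → ℝ) (S : Finset (Fin n)) : ℝ :=
  (2 ^ n : ℝ)⁻¹ * ∑ x : Fin n → Bool, f x * ∏ i ∈ S, sgn (x i)

/-- Expectation of `f` under `ε`-biased coins:
`E_ε[f] = ∑_x f(x) ∏_i (1 + ε·x_i)/2`. -/
noncomputable def biasedExp {n : ℕ} (f : (Fin n → Bool) → ℝ) (ε : ℝ) : ℝ :=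
  ∑ x : Fin n → Bool, f x * ∏ i : Fin n, (1 + ε * sgn (x i)) / 2

/-- uniform expectation -/
noncomputable def uE {n : ℕ} (h : (Fin n → Bool) → ℝ) : ℝ :=
  (2 ^ n : ℝ)⁻¹ * ∑ x : Fin n → Bool, h x

theorem uE_add {n : ℕ} (g h : (Fin n → Bool) → ℝ) :
    uE (fun x => g x + h x) = uE g + uE h := by
  simp only [uE, Finset.sum_add_distrib, mul_add]

theorem uE_smul {n : ℕ} (c : ℝ) (h : (Fin n → Bool) → ℝ) :
    uE (fun x => c * h x) = c * uE h := by
  simp only [uE, ← Finset.mul_sum]; ring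

theorem uE_sum {n : ℕ} {ι : Type} (s : Finset ι) (h : ι → (Fin n → Bool) → ℝ) :
    uE (fun x => ∑ i ∈ s, h i x) = ∑ i ∈ s, uE (h i) := by
  simp only [uE]
  rw [Finset.sum_comm, Finset.mul_sum]

theorem uE_prod {n : ℕ} (h : Fin n → Bool → ℝ) :
    uE (fun x => ∏ i, h i (x i)) = ∏ i, ((h i true + h i false) / 2) := by
  have := Finset.prod_univ_sum (fun _ : Fin n => (Finset.univ : Finset Bool)) h
  rw [Fintype.piFinset_univ] at this
  simp only [uE]
  rw [← this, Finset.prod_div_distrib]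
  simp
  ring

theorem uE_one {n : ℕ} (c : ℝ) : uE (fun _ : Fin n → Bool => c) = c := by
  simp [uE]

theorem uE_P {n : ℕ} (ε : ℝ) : uE (fun x : Fin n → Bool => ∏ i, (1 + ε * sgn (x i))) = 1 := by
  rw [uE_prod (fun _ b => 1 + ε * sgn b)]
  apply Finset.prod_eq_one
  intro i _
  simp [sgn]; ring

theorem uE_PP {n : ℕ} (ε : ℝ) :
    uE (fun x : Fin n → Bool => (∏ i, (1 + ε * sgn (x i))) ^ 2) = (1 + ε ^ 2) ^ n := by
  simp only [← Finset.prod_pow]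
  rw [uE_prod (fun _ b => (1 + ε * sgn b) ^ 2), Finset.prod_const, Finset.card_univ,
    Fintype.card_fin]
  congr 1
  simp [sgn]; ring

theorem uE_Px {n : ℕ} (ε : ℝ) (k : Fin n) :
    uE (fun x : Fin n → Bool => (∏ i, (1 + ε * sgn (x i))) * sgn (x k)) = ε := by
  have h : ∀ x : Fin n → Bool, (∏ i, (1 + ε * sgn (x i))) * sgn (x k)
      = ∏ i, ((1 + ε * sgn (x i)) * (if i = k then sgn (x i) else 1)) := by
    intro x
    rw [Finset.prod_mul_distrib]; simp
  simp only [h]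
  rw [uE_prod (fun i b => (1 + ε * sgn b) * (if i = k then sgn b else 1)),
    Finset.prod_eq_single k]
  · simp [sgn]; ring
  · intro b _ hb
    simp [sgn, hb]; ring
  · simp

theorem uE_x {n : ℕ} (k : Fin n) : uE (fun x : Fin n → Bool => sgn (x k)) = 0 := by
  simpa using uE_Px 0 k

theorem uE_xx {n : ℕ} (k l : Fin n) :
    uE (fun x : Fin n → Bool => sgn (x k) * sgn (x l)) = if k = l then 1 else 0 := by
  split_ifs with hkl
  · subst hkl
    have : ∀ b, sgn b * sgn b = 1 := by intro b; cases b <;> simp [sgn]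
    simp only [this]
    exact uE_one 1
  · have h : ∀ x : Fin n → Bool, sgn (x k) * sgn (x l)
        = ∏ i, ((if i = k then sgn (x i) else 1) * (if i = l then sgn (x i) else 1)) := by
      intro x
      rw [Finset.prod_mul_distrib]; simp
    simp only [h]
    rw [uE_prod (fun i b => (if i = k then sgn b else 1) * (if i = l then sgn b else 1))]
    apply Finset.prod_eq_zero (Finset.mem_univ k)
    simp [sgn, hkl]

theorem uE_gg {n : ℕ} (ε : ℝ) :
    uE (fun x : Fin n → Bool => (∏ i, (1 + ε * sgn (x i)) - 1 - ε * ∑ i, sgn (x i)) ^ 2)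
      = (1 + ε ^ 2) ^ n - 1 - n * ε ^ 2 := by
  have h : ∀ x : Fin n → Bool, (∏ i, (1 + ε * sgn (x i)) - 1 - ε * ∑ i, sgn (x i)) ^ 2
      = (∏ i, (1 + ε * sgn (x i))) ^ 2 + (1 + (ε ^ 2 * (∑ i, ∑ j, sgn (x i) * sgn (x j))
        + ((-2) * (∏ i, (1 + ε * sgn (x i)))
        + ((-2 * ε) * (∑ k, (∏ i, (1 + ε * sgn (x i))) * sgn (x k))
        + (2 * ε) * ∑ i, sgn (x i))))) := by
    intro x
    rw [← Finset.mul_sum, ← Finset.sum_mul_sum]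
    ring
  simp only [h]
  simp only [uE_add, uE_smul, uE_sum, uE_PP, uE_one, uE_P, uE_Px, uE_x, uE_xx]
  simp
  ring

theorem uE_cs {n : ℕ} (g h : (Fin n → Bool) → ℝ) :
    uE (fun x => g x * h x) ^ 2 ≤ uE (fun x => g x ^ 2) * uE (fun x => h x ^ 2) := by
  have := Finset.sum_mul_sq_le_sq_mul_sq Finset.univ g h
  simp only [uE]
  calc _ = ((2 ^ n : ℝ)⁻¹) ^ 2 * (∑ x, g x * h x) ^ 2 := by ring
    _ ≤ ((2 ^ n : ℝ)⁻¹) ^ 2 * ((∑ x, g x ^ 2) * ∑ x, h x ^ 2) := by gcongr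
    _ = _ := by ring

theorem biasedExp_eq {n : ℕ} (f : (Fin n → Bool) → ℝ) (ε : ℝ) :
    biasedExp f ε = uE (fun x => f x * ∏ i, (1 + ε * sgn (x i))) := by
  simp only [biasedExp, uE, Finset.prod_div_distrib, Finset.mul_sum]
  apply Finset.sum_congr rfl
  intro x _
  simp; ring

theorem biasedExp_zero {n : ℕ} (f : (Fin n → Bool) → ℝ) :
    biasedExp f 0 = uE f := by
  rw [biasedExp_eq]; simp

theorem walsh_single {n : ℕ} (f : (Fin n → Bool) → ℝ) (i : Fin n) :
    walshCoeff f {i} = uE (fun x => f x * sgn (x i)) := by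
  simp [walshCoeff, uE]

/-- for nonzero |ε| ≤ 1/√n,
|(1/ε)(E_ε[f]−E_0[f]) − ∑_i f̂({i})| ≤ |ε|·n·√(Var_0(f)), where
Var_0(f) = E_0[f²] − (E_0[f])². -/
theorem coin_deriv_error_le_var (n : ℕ) (hn : 0 < n) (f : (Fin n → Bool) → ℝ)
    (ε : ℝ) (hε0 : ε ≠ 0) (hε : |ε| ≤ 1 / Real.sqrt n) :
    |(1 / ε) * (biasedExp f ε - biasedExp f 0) - ∑ i : Fin n, walshCoeff f {i}| ≤
      |ε| * n * Real.sqrt (biasedExp (fun x => f x ^ 2) 0 - biasedExp f 0 ^ 2) := by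
  have hn' : (0 : ℝ) < n := by exact_mod_cast hn
  simp only [biasedExp_zero, walsh_single]
  rw [biasedExp_eq]
  set m := uE f with hm
  have hV : uE (fun x => (f x - m) ^ 2) = uE (fun x => f x ^ 2) - m ^ 2 := by
    have h : ∀ x, (f x - m) ^ 2 = f x ^ 2 + ((-2 * m) * f x + m ^ 2) := by intro x; ring
    simp only [h]
    simp only [uE_add, uE_smul, uE_one, ← hm]
    ring
  have hG : uE (fun x => (f x - m) * (∏ i, (1 + ε * sgn (x i)) - 1 - ε * ∑ i, sgn (x i)))
      = uE (fun x => f x * ∏ i, (1 + ε * sgn (x i))) - m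
        - ε * ∑ i, uE (fun x => f x * sgn (x i)) := by
    have h : ∀ x : Fin n → Bool,
        (f x - m) * (∏ i, (1 + ε * sgn (x i)) - 1 - ε * ∑ i, sgn (x i))
        = f x * ∏ i, (1 + ε * sgn (x i)) + ((-1) * f x + ((-ε) * (∑ i, f x * sgn (x i))
          + ((-m) * ∏ i, (1 + ε * sgn (x i)) + (m + (m * ε) * ∑ i, sgn (x i))))) := by
      intro x
      rw [← Finset.mul_sum]
      ring
    simp only [h]
    simp only [uE_add, uE_smul, uE_sum, uE_one, uE_P, uE_x, ← hm]
    simp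
    ring
  have hcs := uE_cs (fun x => f x - m)
    (fun x => ∏ i, (1 + ε * sgn (x i)) - 1 - ε * ∑ i, sgn (x i))
  simp only [uE_gg, hV, hG] at hcs
  have hV0 : 0 ≤ uE (fun x => f x ^ 2) - m ^ 2 := by
    rw [← hV]; unfold uE; positivity
  have hu : (n : ℝ) * ε ^ 2 ≤ 1 := by
    have h1 : ε ^ 2 ≤ (1 / Real.sqrt n) ^ 2 := by
      rw [← sq_abs]; gcongr
    rw [div_pow, Real.sq_sqrt hn'.le, one_pow, le_div_iff₀ hn'] at h1
    linarith
  have hu0 : 0 ≤ (n : ℝ) * ε ^ 2 := by positivity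
  have hb : (1 + ε ^ 2) ^ n - 1 - n * ε ^ 2 ≤ (n * ε ^ 2) ^ 2 := by
    have h1 : (1 + ε ^ 2) ^ n ≤ Real.exp (n * ε ^ 2) := by
      rw [Real.exp_nat_mul]
      gcongr
      linarith [Real.add_one_le_exp (ε ^ 2)]
    have h2 := Real.abs_exp_sub_one_sub_id_le (x := n * ε ^ 2) (by rwa [abs_of_nonneg hu0])
    have h3 := le_of_abs_le h2
    linarith
  set V := uE (fun x => f x ^ 2) - m ^ 2
  set A := uE (fun x => f x * ∏ i, (1 + ε * sgn (x i)))
  set W := ∑ i, uE (fun x => f x * sgn (x i))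
  have hA : |A - m - ε * W| ≤ n * ε ^ 2 * Real.sqrt V := by
    apply abs_le_of_sq_le_sq _ (by positivity)
    rw [mul_pow, Real.sq_sqrt hV0]
    nlinarith [mul_le_mul_of_nonneg_left hb hV0]
  have hq : 1 / ε * (A - m) - W = (A - m - ε * W) / ε := by field_simp
  rw [hq, abs_div, div_le_iff₀ (abs_pos.mpr hε0)]
  calc _ ≤ _ := hA
    _ = _ := by rw [← sq_abs ε]; ring
end

section
/- Let n be a positive integer and f : {-1,1}^n → ℝ. For every nonzero ε ∈ [-1,1], we have |(1/ε)·(E_ε[f] − E_0[f]) − ∑_{i=1}^n f̂({i})| ≤ (1/|ε|) · √((1+ε²)^n − (1 + n·ε²)) · √(∑_{|S| ≥ 2} f̂(S)²). -/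
open Finset

lemma aux_split {n : ℕ} (g : Finset (Fin n) → ℝ) :
    ∑ S, g S = g ∅ + ∑ i, g {i} +
      ∑ S ∈ Finset.univ.filter (fun S : Finset (Fin n) => 2 ≤ S.card), g S := by
  rw [← Finset.sum_filter_add_sum_filter_not Finset.univ
    (fun S : Finset (Fin n) => 2 ≤ S.card) g, add_comm]
  congr 1
  have h : Finset.univ.filter (fun S : Finset (Fin n) => ¬ 2 ≤ S.card)
      = insert ∅ (Finset.univ.image (fun i : Fin n => ({i} : Finset (Fin n)))) := by
    ext S
    simp only [Finset.mem_filter, Finset.mem_univ, true_and, Finset.mem_insert,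
      Finset.mem_image]
    constructor
    · intro hS
      have : S.card = 0 ∨ S.card = 1 := by omega
      rcases this with h | h
      · left; exact Finset.card_eq_zero.mp h
      · right
        obtain ⟨a, ha⟩ := Finset.card_eq_one.mp h
        exact ⟨a, ha.symm⟩
    · rintro (h | ⟨a, h⟩)
      · subst h; simp
      · subst h; simp
  rw [h, Finset.sum_insert (by simp), Finset.sum_image]
  intro a _ b _ hab
  simpa using hab

lemma aux_biased {n : ℕ} (f : (Fin n → Bool) → ℝ) (ε : ℝ) :
    biasedExp f ε = ∑ S, ε ^ S.card * walshCoeff f S := by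
  unfold biasedExp walshCoeff
  simp only [Finset.mul_sum]
  rw [Finset.sum_comm]
  refine Finset.sum_congr rfl fun x _ => ?_
  rw [Finset.prod_div_distrib, Finset.prod_one_add, Finset.powerset_univ]
  simp only [Finset.prod_mul_distrib, Finset.prod_const, Finset.card_univ, Fintype.card_fin,
    Finset.sum_div, Finset.mul_sum]
  refine Finset.sum_congr rfl fun S _ => ?_
  ring

lemma aux_sq {n : ℕ} (ε : ℝ) :
    ∑ S ∈ Finset.univ.filter (fun S : Finset (Fin n) => 2 ≤ S.card), (ε ^ S.card) ^ 2
      = (1 + ε ^ 2) ^ n - (1 + n * ε ^ 2) := by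
  have h := aux_split (n := n) (fun S => (ε ^ S.card) ^ 2)
  have h2 : ∑ S : Finset (Fin n), (ε ^ S.card) ^ 2 = (1 + ε ^ 2) ^ n := by
    have := Finset.prod_one_add (s := (Finset.univ : Finset (Fin n))) (f := fun _ => ε ^ 2)
    simp only [Finset.prod_const, Finset.card_univ, Fintype.card_fin,
      Finset.powerset_univ] at this
    rw [this]
    exact Finset.sum_congr rfl fun S _ => by rw [← pow_mul, ← pow_mul, mul_comm]
  rw [h2] at h
  simp at h
  linarith

/-- for nonzero ε ∈ [-1,1],
|(1/ε)(E_ε[f]−E_0[f]) − ∑_i f̂({i})|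
  ≤ (1/|ε|)·√((1+ε²)^n − (1+nε²))·√(∑_{|S|≥2} f̂(S)²). -/
theorem coin_deriv_error_le_tail (n : ℕ) (hn : 0 < n) (f : (Fin n → Bool) → ℝ)
    (ε : ℝ) (hε0 : ε ≠ 0) (hε : ε ∈ Set.Icc (-1 : ℝ) 1) :
    |(1 / ε) * (biasedExp f ε - biasedExp f 0) - ∑ i : Fin n, walshCoeff f {i}| ≤
      (1 / |ε|) * Real.sqrt ((1 + ε ^ 2) ^ n - (1 + n * ε ^ 2)) *
        Real.sqrt (∑ S ∈ Finset.univ.filter (fun S : Finset (Fin n) => 2 ≤ S.card),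
          walshCoeff f S ^ 2) := by
  have h0 : biasedExp f 0 = walshCoeff f ∅ := by
    rw [aux_biased, aux_split]
    have : ∑ S ∈ Finset.univ.filter (fun S : Finset (Fin n) => 2 ≤ S.card),
        (0 : ℝ) ^ S.card * walshCoeff f S = 0 := by
      refine Finset.sum_eq_zero fun S hS => ?_
      have : 2 ≤ S.card := by simpa using hS
      rw [zero_pow (by omega), zero_mul]
    rw [this]
    simp
  have key : (1 / ε) * (biasedExp f ε - biasedExp f 0) - ∑ i : Fin n, walshCoeff f {i}
      = (1 / ε) * ∑ S ∈ Finset.univ.filter (fun S : Finset (Fin n) => 2 ≤ S.card),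
        ε ^ S.card * walshCoeff f S := by
    rw [h0, aux_biased, aux_split]
    simp only [Finset.card_empty, pow_zero, Finset.card_singleton, pow_one, ← Finset.mul_sum]
    field_simp
    ring
  rw [key, abs_mul, abs_div, abs_one, mul_assoc]
  refine mul_le_mul_of_nonneg_left ?_ (by positivity)
  rw [← aux_sq, ← Real.sqrt_mul (Finset.sum_nonneg fun S _ => sq_nonneg _)]
  exact Real.abs_le_sqrt (Finset.sum_mul_sq_le_sq_mul_sq _ _ _)
end

section
/- Let n be a positive integer and f : {-1,1}^n → ℝ. For every nonzero ε with |ε| ≤ 1/(2√n), we have |(1/ε)·(E_ε[f] − E_0[f]) − ∑_{i=1}^n f̂({i})| ≤ 2 · |ε| · n · √(max_{2 ≤ k ≤ n} ∑_{|S| = k} f̂(S)²). -/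
open Finset

lemma biasedExp_eq_s5 {n : ℕ} (f : (Fin n → Bool) → ℝ) (ε : ℝ) :
    biasedExp f ε = ∑ k ∈ range (n + 1), ε ^ k * ∑ S ∈ powersetCard k (univ : Finset (Fin n)), walshCoeff f S := by
  have h1 : biasedExp f ε = ∑ S ∈ (univ : Finset (Fin n)).powerset, ε ^ S.card * walshCoeff f S := by
    unfold biasedExp walshCoeff
    have h (x : Fin n → Bool) : ∏ i : Fin n, (1 + ε * sgn (x i)) / 2 =
        ∑ S ∈ (univ : Finset (Fin n)).powerset, (2 ^ n : ℝ)⁻¹ * (ε ^ S.card * ∏ i ∈ S, sgn (x i)) := by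
      rw [Finset.prod_div_distrib, Finset.prod_one_add, ← Finset.mul_sum]
      simp [Finset.prod_mul_distrib, div_eq_inv_mul]
    simp_rw [h, Finset.mul_sum]
    rw [Finset.sum_comm]
    refine Finset.sum_congr rfl fun S _ => Finset.sum_congr rfl fun x _ => by ring
  rw [h1, Finset.sum_powerset]
  simp only [Finset.card_univ, Fintype.card_fin]
  refine Finset.sum_congr rfl fun k _ => ?_
  rw [Finset.mul_sum]
  refine Finset.sum_congr rfl fun S hS => ?_
  rw [(Finset.mem_powersetCard.1 hS).2]

lemma level_le_sup {n : ℕ} (g : ℕ → ℝ) (hg : ∀ k, 0 ≤ g k) (k : ℕ) (hk : k ∈ Icc 2 n) :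
    g k ≤ ⨆ k ∈ Icc 2 n, g k := by
  have hb : BddAbove (Set.range fun k => ⨆ (_ : k ∈ Icc 2 n), g k) := by
    refine ⟨∑ j ∈ Icc 2 n, g j, ?_⟩
    rintro _ ⟨j, rfl⟩
    by_cases hj : j ∈ Icc 2 n
    · simp only [hj, ciSup_unique]
      exact Finset.single_le_sum (fun i _ => hg i) hj
    · simp only [hj, Real.iSup_of_isEmpty]
      exact Finset.sum_nonneg fun i _ => hg i
  have := le_ciSup hb k
  simpa only [hk, ciSup_unique] using this

lemma geom_half (r : ℝ) (h0 : 0 ≤ r) (h1 : r ≤ 1 / 2) (m : ℕ) : ∑ k ∈ range m, r ^ k ≤ 2 := by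
  have h := geom_sum_mul_neg r m
  have hp : 0 ≤ r ^ m := by positivity
  have hs : 0 ≤ ∑ k ∈ range m, r ^ k := Finset.sum_nonneg fun i _ => by positivity
  nlinarith

/-- for nonzero |ε| ≤ 1/(2√n),
|(1/ε)(E_ε[f]−E_0[f]) − ∑_i f̂({i})| ≤ 2·|ε|·n·√(max_{2≤k≤n} ∑_{|S|=k} f̂(S)²). -/
theorem coin_deriv_error_le_maxlevel (n : ℕ) (hn : 0 < n) (f : (Fin n → Bool) → ℝ)
    (ε : ℝ) (hε0 : ε ≠ 0) (hε : |ε| ≤ 1 / (2 * Real.sqrt n)) :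
    |(1 / ε) * (biasedExp f ε - biasedExp f 0) - ∑ i : Fin n, walshCoeff f {i}| ≤
      2 * |ε| * n * Real.sqrt (⨆ k ∈ Finset.Icc 2 n,
        ∑ S ∈ Finset.univ.filter (fun S : Finset (Fin n) => S.card = k),
          walshCoeff f S ^ 2) := by
  have hM := level_le_sup (n := n) (fun k => ∑ S ∈ Finset.univ.filter (fun S : Finset (Fin n) => S.card = k),
          walshCoeff f S ^ 2) (fun k => Finset.sum_nonneg fun _ _ => sq_nonneg _)
  set M := ⨆ k ∈ Finset.Icc 2 n,
        ∑ S ∈ Finset.univ.filter (fun S : Finset (Fin n) => S.card = k),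
          walshCoeff f S ^ 2 with hMdef
  clear_value M
  set L : ℕ → ℝ := fun k => ∑ S ∈ powersetCard k (univ : Finset (Fin n)), walshCoeff f S with hL
  have hL1 : ∑ i : Fin n, walshCoeff f {i} = L 1 := by
    simp [hL, Finset.powersetCard_one]
  obtain ⟨m, rfl⟩ : ∃ m, n = m + 1 := ⟨n - 1, by omega⟩
  have hE (e : ℝ) : biasedExp f e = ∑ k ∈ range m, e ^ (k + 2) * L (k + 2) + e * L 1 + L 0 := by
    rw [biasedExp_eq_s5, Finset.sum_range_succ', Finset.sum_range_succ']
    simp [hL]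
  have hmain : (1 / ε) * (biasedExp f ε - biasedExp f 0) - ∑ i : Fin (m + 1), walshCoeff f {i}
      = ∑ k ∈ range m, ε ^ (k + 1) * L (k + 2) := by
    rw [hL1, hE, hE]
    have : ∑ k ∈ range m, ε ^ (k + 2) * L (k + 2) = ε * ∑ k ∈ range m, ε ^ (k + 1) * L (k + 2) := by
      rw [Finset.mul_sum]
      exact Finset.sum_congr rfl fun k _ => by ring
    rw [this]
    simp
    field_simp
    ring
  rw [hmain]
  set s := Real.sqrt ((m + 1 : ℕ) : ℝ) with hs
  have hspos : 0 < s := Real.sqrt_pos.2 (by positivity)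
  have hs2 : s ^ 2 = ((m + 1 : ℕ) : ℝ) := Real.sq_sqrt (by positivity)
  have hLk (k : ℕ) (hk : k ∈ range m) : |L (k + 2)| ≤ s ^ (k + 2) * Real.sqrt M := by
    have hk' : k + 2 ∈ Icc 2 (m + 1) := by simp at hk ⊢; omega
    have hm := hM _ hk'
    rw [Finset.univ_filter_card_eq] at hm
    have hM0 : 0 ≤ M := le_trans (Finset.sum_nonneg fun _ _ => sq_nonneg _) hm
    have hcs := sq_sum_le_card_mul_sum_sq (s := powersetCard (k + 2) (univ : Finset (Fin (m + 1)))) (f := walshCoeff f)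
    rw [Finset.card_powersetCard, Finset.card_univ, Fintype.card_fin] at hcs
    have hch : (((m + 1).choose (k + 2) : ℕ) : ℝ) ≤ ((m + 1 : ℕ) : ℝ) ^ (k + 2) := by
      exact_mod_cast Nat.choose_le_pow _ _
    apply abs_le_of_sq_le_sq _ (by positivity)
    rw [mul_pow, Real.sq_sqrt hM0, ← pow_mul, mul_comm (k + 2), pow_mul, hs2]
    exact hcs.trans (mul_le_mul hch hm (Finset.sum_nonneg fun _ _ => sq_nonneg _) (by positivity))
  have hr : |ε| * s ≤ 1 / 2 := by
    calc |ε| * s ≤ 1 / (2 * s) * s := by gcongr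
      _ = 1 / 2 := by field_simp
  calc |∑ k ∈ range m, ε ^ (k + 1) * L (k + 2)| ≤ ∑ k ∈ range m, |ε ^ (k + 1) * L (k + 2)| :=
        Finset.abs_sum_le_sum_abs _ _
    _ ≤ ∑ k ∈ range m, |ε| * s ^ 2 * Real.sqrt M * (|ε| * s) ^ k := by
        refine Finset.sum_le_sum fun k hk => ?_
        rw [abs_mul, abs_pow]
        calc _ ≤ |ε| ^ (k + 1) * (s ^ (k + 2) * Real.sqrt M) := by gcongr; exact hLk k hk
          _ = _ := by ring
    _ = |ε| * s ^ 2 * Real.sqrt M * ∑ k ∈ range m, (|ε| * s) ^ k := by rw [Finset.mul_sum]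
    _ ≤ |ε| * s ^ 2 * Real.sqrt M * 2 := by
        gcongr
        exact geom_half _ (by positivity) hr m
    _ = _ := by rw [hs2]; ring
end

section
/- Let n be a positive integer, β : ℝ → ℝ, and let F be a set of functions f : {-1,1}^n → [-1,1] such that: (1) |E_ε[f] − E_0[f]| ≤ β(ε) for every f ∈ F and every ε ∈ [-1,1]; and (2) for every f ∈ F there exists g ∈ F such that ĝ({i}) = |f̂({i})| for every 1 ≤ i ≤ n. Then for every f ∈ F and every nonzero ε with |ε| ≤ 1/√n, we have ∑_{i=1}^n |f̂({i})| ≤ |β(ε)/ε| + |ε| · n. -/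
open Finset

theorem aux_prod {n : ℕ} (φ : Fin n → Bool → ℝ) :
    ∑ x : Fin n → Bool, ∏ i, φ i (x i) = ∏ i, (φ i true + φ i false) := by
  have h := Finset.prod_univ_sum (fun _ : Fin n => (Finset.univ : Finset Bool)) φ
  rw [Fintype.piFinset_univ] at h
  rw [← h]
  exact Finset.prod_congr rfl fun i _ => by simp

theorem aux_P {n : ℕ} (ε : ℝ) :
    ∑ x : Fin n → Bool, ∏ i, (1 + ε * sgn (x i)) = 2 ^ n := by
  rw [aux_prod (fun _ b => 1 + ε * sgn b)]
  have : (1 + ε * sgn true + (1 + ε * sgn false)) = 2 := by simp [sgn]; ring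
  simp [this]

theorem aux_PP {n : ℕ} (ε : ℝ) :
    ∑ x : Fin n → Bool, (∏ i, (1 + ε * sgn (x i))) ^ 2 = 2 ^ n * (1 + ε ^ 2) ^ n := by
  simp_rw [← Finset.prod_pow]
  rw [aux_prod (fun _ b => (1 + ε * sgn b) ^ 2)]
  have : ((1 + ε * sgn true) ^ 2 + (1 + ε * sgn false) ^ 2) = 2 * (1 + ε ^ 2) := by
    simp [sgn]; ring
  simp [this, mul_pow]

theorem aux_Px {n : ℕ} (ε : ℝ) (i : Fin n) :
    ∑ x : Fin n → Bool, (∏ j, (1 + ε * sgn (x j))) * sgn (x i) = 2 ^ n * ε := by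
  have h1 : ∀ x : Fin n → Bool, (∏ j, (1 + ε * sgn (x j))) * sgn (x i)
      = ∏ j, (1 + ε * sgn (x j)) * (if j = i then sgn (x j) else 1) := by
    intro x
    rw [Finset.prod_mul_distrib]
    simp
  simp_rw [h1]
  rw [aux_prod (fun j b => (1 + ε * sgn b) * (if j = i then sgn b else 1))]
  have h2 : ∀ j : Fin n, ((1 + ε * sgn true) * (if j = i then sgn true else 1) +
      (1 + ε * sgn false) * (if j = i then sgn false else 1)) = 2 * (if j = i then ε else 1) := by
    intro j
    split_ifs <;> simp [sgn] <;> ring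
  simp_rw [h2]
  rw [Finset.prod_mul_distrib]
  simp

theorem aux_x {n : ℕ} (i : Fin n) : ∑ x : Fin n → Bool, sgn (x i) = 0 := by
  simpa using aux_Px (n := n) 0 i

theorem aux_xx {n : ℕ} (i k : Fin n) :
    ∑ x : Fin n → Bool, sgn (x i) * sgn (x k) = if i = k then 2 ^ n else 0 := by
  split_ifs with h
  · subst h
    have : ∀ b, sgn b * sgn b = 1 := by intro b; cases b <;> simp [sgn]
    simp [this]
  · have h1 : ∀ x : Fin n → Bool, sgn (x i) * sgn (x k)
        = ∏ j, (if j = i then sgn (x j) else 1) * (if j = k then sgn (x j) else 1) := by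
      intro x
      rw [Finset.prod_mul_distrib]
      simp
    simp_rw [h1]
    rw [aux_prod (fun j b => (if j = i then sgn b else 1) * (if j = k then sgn b else 1))]
    apply Finset.prod_eq_zero (Finset.mem_univ i)
    simp [h, sgn]

theorem aux_S {n : ℕ} : ∑ x : Fin n → Bool, ∑ i, sgn (x i) = 0 := by
  rw [Finset.sum_comm]; simp [aux_x]

theorem aux_PS {n : ℕ} (ε : ℝ) :
    ∑ x : Fin n → Bool, (∏ j, (1 + ε * sgn (x j))) * ∑ i, sgn (x i) = n * (2 ^ n * ε) := by
  simp_rw [Finset.mul_sum]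
  rw [Finset.sum_comm]; simp [aux_Px]

theorem aux_SS {n : ℕ} :
    ∑ x : Fin n → Bool, (∑ i, sgn (x i)) ^ 2 = n * 2 ^ n := by
  simp_rw [sq, Finset.sum_mul_sum]
  rw [Finset.sum_comm]
  have : ∀ i : Fin n, ∑ x : Fin n → Bool, ∑ k, sgn (x i) * sgn (x k) = 2 ^ n := by
    intro i
    rw [Finset.sum_comm]; simp [aux_xx]
  simp [this]

theorem aux_hh {n : ℕ} (ε : ℝ) :
    ∑ x : Fin n → Bool, ((∏ j, (1 + ε * sgn (x j))) - 1 - ε * ∑ i, sgn (x i)) ^ 2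
      = 2 ^ n * ((1 + ε ^ 2) ^ n - 1 - n * ε ^ 2) := by
  have h : ∀ x : Fin n → Bool,
      ((∏ j, (1 + ε * sgn (x j))) - 1 - ε * ∑ i, sgn (x i)) ^ 2
      = (∏ j, (1 + ε * sgn (x j))) ^ 2 + 1 + ε ^ 2 * (∑ i, sgn (x i)) ^ 2
        - 2 * (∏ j, (1 + ε * sgn (x j))) - 2 * ε * ((∏ j, (1 + ε * sgn (x j))) * ∑ i, sgn (x i))
        + 2 * ε * ∑ i, sgn (x i) := by intro x; ring
  simp_rw [h]
  rw [Finset.sum_add_distrib, Finset.sum_sub_distrib, Finset.sum_sub_distrib,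
    Finset.sum_add_distrib, Finset.sum_add_distrib, ← Finset.mul_sum, ← Finset.mul_sum,
    ← Finset.mul_sum, ← Finset.mul_sum, aux_PP, aux_P, aux_PS, aux_SS, aux_S]
  simp
  ring

theorem aux_gh {n : ℕ} (g : (Fin n → Bool) → ℝ) (ε : ℝ) :
    ∑ x : Fin n → Bool, g x * ((∏ j, (1 + ε * sgn (x j))) - 1 - ε * ∑ i, sgn (x i))
      = 2 ^ n * (biasedExp g ε - biasedExp g 0 - ε * ∑ i, walshCoeff g {i}) := by
  have e1 : ∀ δ : ℝ, 2 ^ n * biasedExp g δ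
      = ∑ x : Fin n → Bool, g x * ∏ j, (1 + δ * sgn (x j)) := by
    intro δ
    unfold biasedExp
    rw [Finset.mul_sum]
    refine Finset.sum_congr rfl fun x _ => ?_
    rw [Finset.prod_div_distrib]
    simp
    field_simp
  have e2 : 2 ^ n * ∑ i, walshCoeff g {i} = ∑ x : Fin n → Bool, g x * ∑ i, sgn (x i) := by
    simp_rw [Finset.mul_sum]
    rw [Finset.sum_comm]
    refine Finset.sum_congr rfl fun i _ => ?_
    simp [walshCoeff]
  have e0 := e1 0
  simp only [zero_mul, add_zero, Finset.prod_const_one, mul_one] at e0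
  rw [mul_sub, mul_sub, mul_left_comm, e1, e0, e2, Finset.mul_sum, ← Finset.sum_sub_distrib,
    ← Finset.sum_sub_distrib]
  exact Finset.sum_congr rfl fun x _ => by ring

/-- if every f ∈ F (all [-1,1]-valued) satisfies the coin theorem
|E_ε[f] − E_0[f]| ≤ β(ε) for ε ∈ [-1,1], and for every f ∈ F there is g ∈ F with
ĝ({i}) = |f̂({i})| for all i, then for every f ∈ F and nonzero |ε| ≤ 1/√n,
∑_i |f̂({i})| ≤ |β(ε)/ε| + |ε|·n. -/
theorem level_one_of_coin_class (n : ℕ) (hn : 0 < n) (β : ℝ → ℝ)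
    (F : Set ((Fin n → Bool) → ℝ))
    (hbdd : ∀ f ∈ F, ∀ x, f x ∈ Set.Icc (-1 : ℝ) 1)
    (hcoin : ∀ f ∈ F, ∀ ε ∈ Set.Icc (-1 : ℝ) 1,
      |biasedExp f ε - biasedExp f 0| ≤ β ε)
    (habs : ∀ f ∈ F, ∃ g ∈ F, ∀ i : Fin n,
      walshCoeff g {i} = |walshCoeff f {i}|) :
    ∀ f ∈ F, ∀ ε : ℝ, ε ≠ 0 → |ε| ≤ 1 / Real.sqrt n →
      ∑ i : Fin n, |walshCoeff f {i}| ≤ |β ε / ε| + |ε| * n := by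
  intro f hf ε hε hle
  obtain ⟨g, hg, hgf⟩ := habs f hf
  simp_rw [← hgf]
  have hn1 : (1 : ℝ) ≤ n := by exact_mod_cast hn
  have hn0 : (0 : ℝ) < n := by linarith
  have hs1 : 1 ≤ Real.sqrt n := Real.one_le_sqrt.mpr hn1
  have hε1 : |ε| ≤ 1 := hle.trans (by rw [div_le_one (by linarith)]; exact hs1)
  have hc := hcoin g hg ε (by rw [Set.mem_Icc]; exact abs_le.mp hε1)
  have ht0 : 0 ≤ n * ε ^ 2 := by positivity
  have ht1 : n * ε ^ 2 ≤ 1 := by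
    have h1 : |ε| ^ 2 ≤ (1 / Real.sqrt n) ^ 2 := by gcongr
    rw [sq_abs, div_pow, Real.sq_sqrt hn0.le, one_pow, le_div_iff₀ hn0] at h1
    linarith
  have hexp : (1 + ε ^ 2) ^ n - 1 - n * ε ^ 2 ≤ (n * ε ^ 2) ^ 2 := by
    have h1 : (1 + ε ^ 2) ^ n ≤ Real.exp (n * ε ^ 2) := by
      rw [Real.exp_nat_mul]
      gcongr
      linarith [Real.add_one_le_exp (ε ^ 2)]
    have h2 := (abs_le.mp (Real.abs_exp_sub_one_sub_id_le
      (by rw [abs_of_nonneg ht0]; exact ht1))).2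
    linarith
  have hp : (0 : ℝ) < 2 ^ n := by positivity
  have hcs := Finset.sum_mul_sq_le_sq_mul_sq Finset.univ g
    (fun x : Fin n → Bool => (∏ j, (1 + ε * sgn (x j))) - 1 - ε * ∑ i, sgn (x i))
  rw [aux_gh, aux_hh] at hcs
  have hg2 : ∑ x, g x ^ 2 ≤ 2 ^ n := by
    calc ∑ x, g x ^ 2 ≤ ∑ x : Fin n → Bool, (1 : ℝ) := by
          refine Finset.sum_le_sum fun x _ => ?_
          obtain ⟨h1, h2⟩ := hbdd g hg x
          nlinarith
      _ = 2 ^ n := by simp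
  set W := ∑ i, walshCoeff g {i} with hW
  set D := biasedExp g ε - biasedExp g 0 with hD
  have hsq : (2 ^ n * (D - ε * W)) ^ 2 ≤ (2 ^ n * (n * ε ^ 2)) ^ 2 := by
    refine hcs.trans ?_
    calc _ ≤ (∑ x, g x ^ 2) * (2 ^ n * (n * ε ^ 2) ^ 2) := by
          gcongr
      _ ≤ 2 ^ n * (2 ^ n * (n * ε ^ 2) ^ 2) := by gcongr
      _ = _ := by ring
  have habs2 := abs_le_of_sq_le_sq hsq (by positivity)
  rw [abs_mul, abs_of_pos hp] at habs2
  have h3 : |D - ε * W| ≤ n * ε ^ 2 := le_of_mul_le_mul_left habs2 hp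
  have hpos : 0 < |ε| := abs_pos.mpr hε
  have h4 : |ε| * |W| ≤ |β ε| + n * ε ^ 2 := by
    rw [← abs_mul]
    have : |ε * W| ≤ |D| + |D - ε * W| := by
      have := abs_sub D (D - ε * W)
      rwa [sub_sub_cancel] at this
    linarith [le_abs_self (β ε)]
  refine (le_abs_self W).trans ?_
  rw [abs_div]
  refine le_of_mul_le_mul_left (h4.trans (le_of_eq ?_)) hpos
  rw [← sq_abs ε]
  field_simp
end

section
/- Let n be a positive integer, t ≥ 0, and f : {-1,1}^n → [-1,1] with |∑_{i=1}^n f̂({i})| ≤ t. Then for every ε with |ε| ≤ 1/√n, we have |E_ε[f] − E_0[f]| ≤ |ε| · (t + |ε| · n). -/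
open Finset

lemma aux_sum_cons (n : ℕ) (F : (Fin (n+1) → Bool) → ℝ) :
    ∑ x, F x = ∑ y : Fin n → Bool, (F (Fin.cons true y) + F (Fin.cons false y)) := by
  rw [← (Fin.consEquiv (fun _ : Fin (n+1) => Bool)).sum_comp, Fintype.sum_prod_type]
  simp [Fin.consEquiv, Finset.sum_add_distrib]

lemma aux_P1 (ε : ℝ) (n : ℕ) :
    ∑ x : Fin n → Bool, ∏ i, (1 + ε * sgn (x i)) = 2 ^ n := by
  induction n with
  | zero => simp
  | succ n ih =>
    rw [aux_sum_cons, pow_succ, ← ih, Finset.sum_mul]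
    refine Finset.sum_congr rfl fun y _ => ?_
    simp only [Fin.prod_univ_succ, Fin.cons_zero, Fin.cons_succ]
    simp [sgn]
    ring

lemma aux_P2 (ε : ℝ) (n : ℕ) :
    ∑ x : Fin n → Bool, (∏ i, (1 + ε * sgn (x i))) ^ 2 = 2 ^ n * (1 + ε ^ 2) ^ n := by
  induction n with
  | zero => simp
  | succ n ih =>
    have : (2:ℝ) ^ (n+1) * (1 + ε ^ 2) ^ (n+1) = (2 ^ n * (1 + ε ^ 2) ^ n) * (2 * (1 + ε^2)) := by
      ring
    rw [aux_sum_cons, this, ← ih, Finset.sum_mul]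
    refine Finset.sum_congr rfl fun y _ => ?_
    simp only [Fin.prod_univ_succ, Fin.cons_zero, Fin.cons_succ]
    generalize ∏ i, (1 + ε * sgn (y i)) = p
    simp [sgn]
    ring

lemma aux_G (ε : ℝ) (n : ℕ) :
    ∑ x : Fin n → Bool, (∏ i, (1 + ε * sgn (x i)) - 1 - ε * ∑ i, sgn (x i)) ^ 2
      = 2 ^ n * ((1 + ε ^ 2) ^ n - 1 - n * ε ^ 2) := by
  induction n with
  | zero => simp
  | succ n ih =>
    have h : ∀ y : Fin n → Bool,
      (∏ i, (1 + ε * sgn ((Fin.cons true y : Fin (n+1) → Bool) i)) - 1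
          - ε * ∑ i, sgn ((Fin.cons true y : Fin (n+1) → Bool) i)) ^ 2
      + (∏ i, (1 + ε * sgn ((Fin.cons false y : Fin (n+1) → Bool) i)) - 1
          - ε * ∑ i, sgn ((Fin.cons false y : Fin (n+1) → Bool) i)) ^ 2
      = 2 * (∏ i, (1 + ε * sgn (y i)) - 1 - ε * ∑ i, sgn (y i)) ^ 2
        + (2 * ε ^ 2 * (∏ i, (1 + ε * sgn (y i))) ^ 2
          - 4 * ε ^ 2 * (∏ i, (1 + ε * sgn (y i))) + 2 * ε ^ 2) := by
      intro y
      simp only [Fin.prod_univ_succ, Fin.sum_univ_succ, Fin.cons_zero, Fin.cons_succ]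
      generalize ∏ i, (1 + ε * sgn (y i)) = p
      generalize ∑ i, sgn (y i) = l
      simp [sgn]
      ring
    rw [aux_sum_cons, Finset.sum_congr rfl fun y _ => h y]
    simp only [Finset.sum_add_distrib, Finset.sum_sub_distrib, ← Finset.mul_sum]
    rw [ih, aux_P1, aux_P2]
    simp
    ring

/-- if f : {-1,1}^n → [-1,1] has |∑_i f̂({i})| ≤ t, then for all
|ε| ≤ 1/√n, |E_ε[f] − E_0[f]| ≤ |ε|·(t + |ε|·n). -/
theorem coin_of_fourier_sum (n : ℕ) (hn : 0 < n) (t : ℝ) (ht : 0 ≤ t)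
    (f : (Fin n → Bool) → ℝ) (hf : ∀ x, f x ∈ Set.Icc (-1 : ℝ) 1)
    (hsum : |∑ i : Fin n, walshCoeff f {i}| ≤ t)
    (ε : ℝ) (hε : |ε| ≤ 1 / Real.sqrt n) :
    |biasedExp f ε - biasedExp f 0| ≤ |ε| * (t + |ε| * n) := by
  have hn' : (0:ℝ) < n := by exact_mod_cast hn
  have ha : (n:ℝ) * ε ^ 2 ≤ 1 := by
    have h1 : |ε| ^ 2 ≤ (1 / Real.sqrt n) ^ 2 := pow_le_pow_left₀ (abs_nonneg _) hε 2
    rw [sq_abs, div_pow, Real.sq_sqrt hn'.le, one_pow, le_div_iff₀ hn'] at h1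
    linarith
  have ha0 : 0 ≤ (n:ℝ) * ε ^ 2 := by positivity
  have hW : (1 + ε ^ 2) ^ n - 1 - n * ε ^ 2 ≤ ((n:ℝ) * ε ^ 2) ^ 2 := by
    have h1 : (1 + ε ^ 2) ^ n ≤ Real.exp (n * ε ^ 2) := by
      rw [Real.exp_nat_mul]
      refine pow_le_pow_left₀ (by positivity) ?_ n
      linarith [Real.add_one_le_exp (ε ^ 2)]
    have h2 := Real.abs_exp_sub_one_sub_id_le (x := n * ε ^ 2) (by rwa [abs_of_nonneg ha0])
    linarith [le_abs_self (Real.exp (n * ε ^ 2) - 1 - n * ε ^ 2)]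
  set g : (Fin n → Bool) → ℝ := fun x =>
    ∏ i, (1 + ε * sgn (x i)) - 1 - ε * ∑ i, sgn (x i) with hg
  have hG : ∑ x, g x ^ 2 = 2 ^ n * ((1 + ε ^ 2) ^ n - 1 - n * ε ^ 2) := aux_G ε n
  have hF : ∑ x, f x ^ 2 ≤ 2 ^ n := by
    calc ∑ x, f x ^ 2 ≤ ∑ x : Fin n → Bool, (1:ℝ) := by
          refine Finset.sum_le_sum fun x _ => ?_
          have := hf x
          nlinarith [this.1, this.2]
      _ = 2 ^ n := by simp
  have hCS : |∑ x, f x * g x| ≤ 2 ^ n * (n * ε ^ 2) := by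
    apply abs_le_of_sq_le_sq _ (by positivity)
    calc (∑ x, f x * g x) ^ 2 ≤ (∑ x, f x ^ 2) * ∑ x, g x ^ 2 :=
          Finset.sum_mul_sq_le_sq_mul_sq _ _ _
      _ ≤ 2 ^ n * (2 ^ n * (n * ε ^ 2) ^ 2) := by
          refine mul_le_mul hF ?_ (Finset.sum_nonneg fun _ _ => sq_nonneg _) (by positivity)
          rw [hG]
          exact mul_le_mul_of_nonneg_left hW (by positivity)
      _ = (2 ^ n * (n * ε ^ 2)) ^ 2 := by ring
  have key : biasedExp f ε - biasedExp f 0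
      = ε * ∑ i : Fin n, walshCoeff f {i} + (2 ^ n : ℝ)⁻¹ * ∑ x, f x * g x := by
    have hL : ∑ i : Fin n, walshCoeff f {i}
        = (2 ^ n : ℝ)⁻¹ * ∑ x, f x * ∑ i, sgn (x i) := by
      simp only [walshCoeff, Finset.prod_singleton]
      rw [← Finset.mul_sum, Finset.sum_comm]
      simp only [Finset.mul_sum]
    rw [hL]
    simp only [biasedExp, Finset.prod_div_distrib, Finset.mul_sum]
    rw [← Finset.sum_sub_distrib, ← Finset.sum_add_distrib]
    refine Finset.sum_congr rfl fun x _ => ?_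
    simp only [hg, ← Finset.mul_sum]
    simp
    ring
  rw [key]
  have h3 : |(2 ^ n : ℝ)⁻¹ * ∑ x, f x * g x| ≤ n * ε ^ 2 := by
    rw [abs_mul, abs_of_pos (by positivity : (0:ℝ) < (2 ^ n : ℝ)⁻¹), inv_mul_le_iff₀ (by positivity)]
    exact hCS
  have h4 : |ε * ∑ i : Fin n, walshCoeff f {i}| ≤ |ε| * t := by
    rw [abs_mul]
    exact mul_le_mul_of_nonneg_left hsum (abs_nonneg _)
  have h5 : |ε| * (t + |ε| * n) = |ε| * t + n * ε ^ 2 := by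
    rw [← sq_abs ε]; ring
  rw [h5]
  exact (abs_add_le _ _).trans (add_le_add h4 h3)
end

section
/- Let n be a positive integer, t ≥ 0, and let F be a set of functions f : {-1,1}^n → [-1,1] which is closed under restriction (i.e., for every f ∈ F, every coordinate i ∈ [n], and every b ∈ {-1,1}, the function x ↦ f(x₁,...,x_{i-1}, b, x_{i+1},...,x_n) also belongs to F) and which satisfies |∑_{i=1}^n f̂({i})| ≤ t for every f ∈ F. Then for every f ∈ F and every ε with 0 ≤ ε < 1, we have |E_ε[f] − E_0[f]| ≤ t · ln(1/(1−ε)). -/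
open Finset

noncomputable def vecExp {n : ℕ} (f : (Fin n → Bool) → ℝ) (p : Fin n → ℝ) : ℝ :=
  ∑ x : Fin n → Bool, f x * ∏ i : Fin n, (1 + p i * sgn (x i)) / 2

lemma vecExp_step {n : ℕ} (f : (Fin n → Bool) → ℝ) (p q : Fin n → ℝ) (i : Fin n) (e : ℝ)
    (hi : p i = e + (1 - e) * q i) (hne : ∀ j, j ≠ i → p j = q j) :
    vecExp f p = e * vecExp (fun x => f (Function.update x i true)) q + (1 - e) * vecExp f q := by
  have hinv : Function.Involutive
      (fun x : Fin n → Bool => Function.update x i (!(x i))) := by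
    intro x; simp
  have key : ∀ A : (Fin n → Bool) → ℝ,
      ∑ x, A x = (∑ x, (A x + A (Function.update x i (!(x i))))) / 2 := by
    intro A
    have : ∑ x, A (Function.update x i (!(x i))) = ∑ x, A x :=
      Equiv.sum_comp hinv.toPerm A
    rw [Finset.sum_add_distrib, this]; ring
  have hprod : ∀ (r : Fin n → ℝ) (x : Fin n → Bool), ∏ j, (1 + r j * sgn (x j)) / 2
      = (1 + r i * sgn (x i)) / 2 * ∏ j ∈ univ.erase i, (1 + r j * sgn (x j)) / 2 := by
    intro r x
    exact (Finset.mul_prod_erase univ (fun j => (1 + r j * sgn (x j)) / 2) (mem_univ i)).symm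
  have hR : ∀ (r : Fin n → ℝ) (x : Fin n → Bool) (b : Bool),
      ∏ j ∈ univ.erase i, (1 + r j * sgn (Function.update x i b j)) / 2
      = ∏ j ∈ univ.erase i, (1 + r j * sgn (x j)) / 2 := by
    intro r x b
    refine Finset.prod_congr rfl fun j hj => ?_
    rw [Function.update_of_ne (Finset.ne_of_mem_erase hj)]
  have hpq : ∀ x : Fin n → Bool, ∏ j ∈ univ.erase i, (1 + p j * sgn (x j)) / 2
      = ∏ j ∈ univ.erase i, (1 + q j * sgn (x j)) / 2 := by
    intro x
    refine Finset.prod_congr rfl fun j hj => ?_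
    rw [hne j (Finset.ne_of_mem_erase hj)]
  unfold vecExp
  rw [key, key (fun x => f (Function.update x i true) * _), key (fun x => f x * ∏ i, (1 + q i * sgn (x i)) / 2)]
  rw [mul_div_assoc', mul_div_assoc', Finset.mul_sum, Finset.mul_sum, ← add_div,
    ← Finset.sum_add_distrib]
  congr 1
  refine Finset.sum_congr rfl fun x _ => ?_
  simp only [hprod, hR, hpq, Function.update_self, Function.update_idem, hi]
  generalize ∏ j ∈ univ.erase i, (1 + q j * sgn (x j)) / 2 = R
  cases hx : x i
  · have : Function.update x i false = x := by rw [← hx]; simp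
    simp [sgn]
    ring
  · have : Function.update x i true = x := by rw [← hx]; simp
    simp [sgn, this]
    ring

lemma base_deriv {n : ℕ} (f : (Fin n → Bool) → ℝ) :
    HasDerivAt (fun d : ℝ => vecExp f (fun _ => d)) (∑ i : Fin n, walshCoeff f {i}) 0 := by
  unfold vecExp
  have h : ∀ x : Fin n → Bool, HasDerivAt
      (fun d : ℝ => f x * ∏ i : Fin n, (1 + d * sgn (x i)) / 2)
      (f x * ∑ i : Fin n, (∏ j ∈ univ.erase i, (1 + (0:ℝ) * sgn (x j)) / 2) • (sgn (x i) / 2)) 0 := by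
    intro x
    refine HasDerivAt.const_mul _ (HasDerivAt.fun_finsetProd fun i _ => ?_)
    have := (((hasDerivAt_id (0:ℝ)).mul_const (sgn (x i))).const_add 1).div_const 2
    simpa using this
  have h2 := HasDerivAt.fun_sum (u := univ) fun x _ => h x
  refine h2.congr_deriv (Eq.symm ?_)
  unfold walshCoeff
  simp only [Finset.mul_sum]
  rw [Finset.sum_comm]
  refine Finset.sum_congr rfl fun x _ => Finset.sum_congr rfl fun i _ => ?_
  have hn : 0 < n := i.pos
  obtain ⟨m, rfl⟩ : ∃ m, n = m + 1 := ⟨n - 1, by omega⟩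
  simp [Finset.card_erase_of_mem]
  field_simp
  ring

lemma restr_deriv {n : ℕ} (t : ℝ) (F : Set ((Fin n → Bool) → ℝ))
    (hrestr : ∀ f ∈ F, ∀ i : Fin n, ∀ b : Bool,
      (fun x => f (Function.update x i b)) ∈ F)
    (hsum : ∀ f ∈ F, |∑ i : Fin n, walshCoeff f {i}| ≤ t) (e : ℝ) (h0 : 0 ≤ e) (h1 : e < 1)
    (S : Finset (Fin n)) : ∀ f ∈ F, ∃ d, HasDerivAt
      (fun u : ℝ => vecExp f (fun i => if i ∈ S then e + (1 - e) * u else u)) d 0 ∧ |d| ≤ t := by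
  induction S using Finset.induction_on with
  | empty =>
    intro f hf
    exact ⟨_, by simpa using base_deriv f, hsum f hf⟩
  | insert i S hi ih =>
    intro f hf
    obtain ⟨d1, hd1, hb1⟩ := ih _ (hrestr f hf i true)
    obtain ⟨d2, hd2, hb2⟩ := ih f hf
    refine ⟨e * d1 + (1 - e) * d2, ?_, ?_⟩
    · have := (hd1.const_mul e).add (hd2.const_mul (1 - e))
      refine this.congr_of_eventuallyEq (Filter.Eventually.of_forall fun u => ?_)
      refine vecExp_step f _ _ i e ?_ ?_
      · simp [hi]
      · intro j hj
        simp [hj]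
    · rw [abs_le] at *
      constructor <;> nlinarith

lemma biasedExp_deriv {n : ℕ} (t : ℝ) (F : Set ((Fin n → Bool) → ℝ))
    (hrestr : ∀ f ∈ F, ∀ i : Fin n, ∀ b : Bool,
      (fun x => f (Function.update x i b)) ∈ F)
    (hsum : ∀ f ∈ F, |∑ i : Fin n, walshCoeff f {i}| ≤ t) (f) (hf : f ∈ F)
    (e : ℝ) (h0 : 0 ≤ e) (h1 : e < 1) :
    ∃ d, HasDerivAt (biasedExp f) d e ∧ |d| ≤ t / (1 - e) := by
  obtain ⟨d, hd, hb⟩ := restr_deriv t F hrestr hsum e h0 h1 univ f hf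
  have hp : 0 < 1 - e := by linarith
  refine ⟨d * (1 / (1 - e)), ?_, ?_⟩
  · have hl : HasDerivAt (fun y : ℝ => (y - e) / (1 - e)) (1 / (1 - e)) e :=
      ((hasDerivAt_id e).sub_const e).div_const (1 - e)
    have hd' : HasDerivAt
      (fun u : ℝ => vecExp f (fun i => if i ∈ univ then e + (1 - e) * u else u)) d
      ((e - e) / (1 - e)) := by simpa using hd
    have := hd'.comp e hl
    refine this.congr_of_eventuallyEq (Filter.Eventually.of_forall fun y => ?_)
    have : e + (1 - e) * ((y - e) / (1 - e)) = y := by field_simp; ring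
    simp [vecExp, biasedExp, this]
  · rw [abs_mul, abs_of_pos (by positivity : 0 < 1 / (1 - e)), mul_one_div]
    gcongr

/-- Tal: if F is a class of [-1,1]-valued functions closed under
restriction with |∑_i f̂({i})| ≤ t for every f ∈ F, then for every f ∈ F and
0 ≤ ε < 1, |E_ε[f] − E_0[f]| ≤ t·ln(1/(1−ε)). -/
theorem coin_of_restriction_closed (n : ℕ) (hn : 0 < n) (t : ℝ) (ht : 0 ≤ t)
    (F : Set ((Fin n → Bool) → ℝ))
    (hbdd : ∀ f ∈ F, ∀ x, f x ∈ Set.Icc (-1 : ℝ) 1)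
    (hrestr : ∀ f ∈ F, ∀ i : Fin n, ∀ b : Bool,
      (fun x => f (Function.update x i b)) ∈ F)
    (hsum : ∀ f ∈ F, |∑ i : Fin n, walshCoeff f {i}| ≤ t) :
    ∀ f ∈ F, ∀ ε : ℝ, 0 ≤ ε → ε < 1 →
      |biasedExp f ε - biasedExp f 0| ≤ t * Real.log (1 / (1 - ε)) := by
  intro f hf ε h0 h1
  choose! g hg using fun e (h : 0 ≤ e ∧ e < 1) =>
    biasedExp_deriv t F hrestr hsum f hf e h.1 h.2
  have hB : ∀ x, 0 ≤ x → x < 1 →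
      HasDerivAt (fun y : ℝ => t * -Real.log (1 - y)) (t / (1 - x)) x := by
    intro x _ hx
    have hp : 1 - x ≠ 0 := by linarith
    have := ((((hasDerivAt_id x).const_sub 1).log hp).neg).const_mul t
    refine this.congr_deriv ?_
    simp; field_simp
  have hG : ∀ x, 0 ≤ x → x < 1 →
      HasDerivAt (fun y : ℝ => biasedExp f y - biasedExp f 0) (g x) x := fun x a b =>
    (hg x ⟨a, b⟩).1.sub_const _
  have := image_norm_le_of_norm_deriv_right_le_deriv_boundary' (a := 0) (b := ε)
    (f := fun y : ℝ => biasedExp f y - biasedExp f 0) (f' := g)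
    (B := fun y : ℝ => t * -Real.log (1 - y)) (B' := fun x => t / (1 - x))
    (fun x hx => (hG x hx.1 (hx.2.trans_lt h1)).continuousAt.continuousWithinAt)
    (fun x hx => (hG x hx.1 (hx.2.trans h1)).hasDerivWithinAt)
    (by simp)
    (fun x hx => (hB x hx.1 (hx.2.trans_lt h1)).continuousAt.continuousWithinAt)
    (fun x hx => (hB x hx.1 (hx.2.trans h1)).hasDerivWithinAt)
    (fun x hx => by simpa using (hg x ⟨hx.1, hx.2.trans h1⟩).2)
    (Set.right_mem_Icc.2 h0)
  simpa [Real.log_inv] using this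
end

section
/- Let n be a positive integer, t > 0, and f : {-1,1}^n → ℝ with L₁ᵏ(f) = ∑_{|S|=k} |f̂(S)| ≤ t^k for all 1 ≤ k ≤ n. Then for every ε with |ε| ≤ 1/(2t), we have |E_ε[f] − E_0[f]| ≤ 2t · |ε|. -/
open Finset

theorem biasedExp_eq_aux {n : ℕ} (f : (Fin n → Bool) → ℝ) (ε : ℝ) :
    biasedExp f ε = ∑ S : Finset (Fin n), ε ^ S.card * walshCoeff f S := by
  have h : ∀ x : Fin n → Bool, f x * ∏ i : Fin n, (1 + ε * sgn (x i)) / 2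
      = ∑ S : Finset (Fin n), ε ^ S.card * ((2 ^ n : ℝ)⁻¹ * (f x * ∏ i ∈ S, sgn (x i))) := by
    intro x
    rw [Finset.prod_div_distrib, Finset.prod_one_add]
    simp only [Finset.prod_mul_distrib, Finset.prod_const, Finset.card_univ, Fintype.card_fin,
      Finset.powerset_univ]
    rw [div_eq_mul_inv, Finset.sum_mul, Finset.mul_sum]
    refine Finset.sum_congr rfl fun S _ => ?_
    ring
  unfold biasedExp walshCoeff
  rw [Finset.sum_congr rfl fun x _ => h x, Finset.sum_comm]
  refine Finset.sum_congr rfl fun S _ => ?_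
  rw [Finset.mul_sum, Finset.mul_sum]

theorem geom_aux (r : ℝ) (h0 : 0 ≤ r) (h1 : r ≤ 1 / 2) (n : ℕ) :
    ∑ k ∈ Finset.range n, r ^ (k + 1) ≤ 2 * r := by
  have key : ∑ k ∈ Finset.range n, r ^ (k + 1) ≤ 2 * r - 2 * r ^ (n + 1) := by
    induction n with
    | zero => simp
    | succ m ih =>
      rw [Finset.sum_range_succ]
      have hp : 0 ≤ r ^ (m + 1) := pow_nonneg h0 _
      have e : r ^ (m + 1 + 1) = r ^ (m + 1) * r := pow_succ _ _
      nlinarith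
  have hp : 0 ≤ r ^ (n + 1) := pow_nonneg h0 _
  linarith

/-- folklore: if f has Fourier growth L₁ᵏ(f) ≤ tᵏ for all
1 ≤ k ≤ n, then for all |ε| ≤ 1/(2t), |E_ε[f] − E_0[f]| ≤ 2t·|ε|. -/
theorem coin_of_fourier_growth (n : ℕ) (hn : 0 < n) (t : ℝ) (ht : 0 < t)
    (f : (Fin n → Bool) → ℝ)
    (hgrowth : ∀ k : ℕ, 1 ≤ k → k ≤ n →
      ∑ S ∈ Finset.univ.filter (fun S : Finset (Fin n) => S.card = k),
        |walshCoeff f S| ≤ t ^ k)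
    (ε : ℝ) (hε : |ε| ≤ 1 / (2 * t)) :
    |biasedExp f ε - biasedExp f 0| ≤ 2 * t * |ε| := by
  have hr : |ε| * t ≤ 1 / 2 := by
    rw [le_div_iff₀ (by positivity)] at hε
    linarith
  have hr0 : 0 ≤ |ε| * t := by positivity
  rw [biasedExp_eq_aux, biasedExp_eq_aux, ← Finset.sum_sub_distrib]
  refine (Finset.abs_sum_le_sum_abs _ _).trans ?_
  rw [← Finset.sum_fiberwise_of_maps_to (s := Finset.univ) (t := Finset.range (n + 1))
    (g := fun S : Finset (Fin n) => S.card)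
    (fun S _ => by
      have := S.card_le_univ
      simp only [Fintype.card_fin] at this
      exact Finset.mem_range.2 (by omega)), Finset.sum_range_succ']
  have hz : ∑ S ∈ Finset.univ.filter (fun S : Finset (Fin n) => S.card = 0),
      |ε ^ S.card * walshCoeff f S - 0 ^ S.card * walshCoeff f S| = 0 := by
    refine Finset.sum_eq_zero fun S hS => ?_
    rw [(Finset.mem_filter.1 hS).2]
    simp
  rw [hz, add_zero]
  have hb : ∀ k ∈ Finset.range n,
      ∑ S ∈ Finset.univ.filter (fun S : Finset (Fin n) => S.card = k + 1),
      |ε ^ S.card * walshCoeff f S - 0 ^ S.card * walshCoeff f S| ≤ (|ε| * t) ^ (k + 1) := by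
    intro k hk
    have hk' := Finset.mem_range.1 hk
    have e : ∑ S ∈ Finset.univ.filter (fun S : Finset (Fin n) => S.card = k + 1),
      |ε ^ S.card * walshCoeff f S - 0 ^ S.card * walshCoeff f S|
      = |ε| ^ (k + 1) * ∑ S ∈ Finset.univ.filter (fun S : Finset (Fin n) => S.card = k + 1),
        |walshCoeff f S| := by
      rw [Finset.mul_sum]
      refine Finset.sum_congr rfl fun S hS => ?_
      rw [(Finset.mem_filter.1 hS).2]
      simp [abs_mul, abs_pow]
    rw [e, mul_pow]
    exact mul_le_mul_of_nonneg_left (hgrowth (k + 1) (by omega) (by omega)) (by positivity)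
  refine (Finset.sum_le_sum hb).trans ((geom_aux _ hr0 hr n).trans (le_of_eq (by ring)))
end

section
/- Let m be a positive integer and g : {-1,1}^m → [-1,1]. Let g̃ be the random function {-1,1}^m → {-1,1} obtained by independently, for each x ∈ {-1,1}^m, setting g̃(x) = 1 with probability (1+g(x))/2 and g̃(x) = -1 with probability (1−g(x))/2 (so that E[g̃(x)] = g(x)). Then for every nonempty collection T ⊆ 2^{[m]} of subsets of [m] and every ε > 0, the probability that |∑_{S∈T} ĝ̃(S) − ∑_{S∈T} ĝ(S)| ≥ ε is at most 2·exp(−2^{m−1}·ε²/|T|). -/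
open Finset

lemma aux_two_point (p s : ℝ) (hp : p ∈ Set.Icc (-1 : ℝ) 1) :
    (1 + p) / 2 * Real.exp (s * (1 - p)) + (1 - p) / 2 * Real.exp (s * (-1 - p))
      ≤ Real.exp (s ^ 2 / 2) := by
  obtain ⟨h1, h2⟩ := hp
  let μ : MeasureTheory.Measure Bool :=
    ENNReal.ofReal ((1 + p) / 2) • MeasureTheory.Measure.dirac true +
      ENNReal.ofReal ((1 - p) / 2) • MeasureTheory.Measure.dirac false
  have hμ : MeasureTheory.IsProbabilityMeasure μ := by
    constructor
    simp only [μ, MeasureTheory.Measure.add_apply, MeasureTheory.Measure.smul_apply,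
      MeasureTheory.measure_univ, smul_eq_mul, mul_one]
    rw [← ENNReal.ofReal_add (by linarith) (by linarith)]
    ring_nf
    simp
  have hint : ∀ f : Bool → ℝ, ∫ b, f b ∂μ = (1 + p) / 2 * f true + (1 - p) / 2 * f false := by
    intro f
    have hfin : ∀ (r : ℝ) (b : Bool), MeasureTheory.Integrable f
        (ENNReal.ofReal r • MeasureTheory.Measure.dirac b) := fun r b =>
      MeasureTheory.Integrable.smul_measure .of_finite ENNReal.ofReal_ne_top
    rw [MeasureTheory.integral_add_measure (hfin _ _) (hfin _ _),
      MeasureTheory.integral_smul_measure, MeasureTheory.integral_smul_measure,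
      MeasureTheory.integral_dirac, MeasureTheory.integral_dirac,
      ENNReal.toReal_ofReal (by linarith), ENNReal.toReal_ofReal (by linarith)]
    simp
  have key := ProbabilityTheory.hasSubgaussianMGF_of_mem_Icc_of_integral_eq_zero
    (μ := μ) (X := fun b => sgn b - p) (a := -1 - p) (b := 1 - p)
    (by fun_prop) (Filter.Eventually.of_forall (by
      intro b; cases b <;> simp [sgn] <;> linarith))
    (by rw [hint]; simp [sgn]; ring)
  have h := key.mgf_le s
  rw [ProbabilityTheory.mgf, hint] at h
  simp only [sgn] at h
  refine (le_of_eq (by simp)).trans (h.trans (le_of_eq ?_))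
  congr 1
  have : (1 - p - (-1 - p)) = 2 := by ring
  rw [this]
  simp

lemma aux_mgf {ι : Type*} [Fintype ι] [DecidableEq ι] (g c : ι → ℝ)
    (hg : ∀ x, g x ∈ Set.Icc (-1 : ℝ) 1) (t : ℝ) :
    ∑ ω : ι → Bool, (∏ x, (if ω x then (1 + g x) / 2 else (1 - g x) / 2)) *
      Real.exp (t * ∑ x, c x * (sgn (ω x) - g x)) ≤ Real.exp (t ^ 2 * (∑ x, c x ^ 2) / 2) := by
  have h1 : ∀ ω : ι → Bool, (∏ x, (if ω x then (1 + g x) / 2 else (1 - g x) / 2)) *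
      Real.exp (t * ∑ x, c x * (sgn (ω x) - g x)) =
      ∏ x, ((if ω x then (1 + g x) / 2 else (1 - g x) / 2) *
        Real.exp (t * c x * (sgn (ω x) - g x))) := by
    intro ω
    rw [Finset.prod_mul_distrib, Finset.mul_sum, Real.exp_sum]
    simp only [mul_assoc]
  simp only [h1]
  have h2 := Finset.prod_univ_sum (fun _ : ι => (Finset.univ : Finset Bool))
    (fun x b => (if b then (1 + g x) / 2 else (1 - g x) / 2) *
        Real.exp (t * c x * (sgn b - g x)))
  rw [Fintype.piFinset_univ] at h2
  rw [← h2]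
  have h3 : Real.exp (t ^ 2 * (∑ x, c x ^ 2) / 2) = ∏ x, Real.exp ((t * c x) ^ 2 / 2) := by
    rw [← Real.exp_sum, Finset.mul_sum, Finset.sum_div]
    simp only [mul_pow]
  rw [h3]
  have hw : ∀ (b : Bool) x, (0 : ℝ) ≤ if b then (1 + g x) / 2 else (1 - g x) / 2 := by
    intro b x
    obtain ⟨h1, h2⟩ := hg x
    split_ifs <;> linarith
  refine Finset.prod_le_prod (fun x _ => Finset.sum_nonneg fun b _ =>
    mul_nonneg (hw b x) (Real.exp_pos _).le) fun x _ => ?_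
  have := aux_two_point (g x) (t * c x) (hg x)
  simpa [sgn] using this

lemma aux_orth {m : ℕ} (S S' : Finset (Fin m)) :
    ∑ x : Fin m → Bool, (∏ i ∈ S, sgn (x i)) * (∏ i ∈ S', sgn (x i)) =
      if S = S' then (2 : ℝ) ^ m else 0 := by
  have h1 : ∀ x : Fin m → Bool, (∏ i ∈ S, sgn (x i)) * (∏ i ∈ S', sgn (x i)) =
      ∏ i, ((if i ∈ S then sgn (x i) else 1) * (if i ∈ S' then sgn (x i) else 1)) := by
    intro x
    rw [Finset.prod_mul_distrib]
    simp
  simp only [h1]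
  have h2 := Finset.prod_univ_sum (fun _ : Fin m => (Finset.univ : Finset Bool))
    (fun i b => ((if i ∈ S then sgn b else 1) * (if i ∈ S' then sgn b else 1)))
  rw [Fintype.piFinset_univ] at h2
  rw [← h2]
  split_ifs with h
  · subst h
    rw [Finset.prod_congr rfl (g := fun _ => (2 : ℝ))]
    · simp
    · intro i _
      by_cases hi : i ∈ S <;> simp [hi, sgn] <;> norm_num
  · have : ∃ i, ¬ (i ∈ S ↔ i ∈ S') := by
      by_contra! hc
      exact h (Finset.ext hc)
    obtain ⟨i, hi⟩ := this
    apply Finset.prod_eq_zero (Finset.mem_univ i)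
    by_cases ha : i ∈ S <;> by_cases hb : i ∈ S' <;> simp_all [sgn]

lemma aux_parseval {m : ℕ} (T : Finset (Finset (Fin m))) :
    ∑ x : Fin m → Bool, ((2 ^ m : ℝ)⁻¹ * ∑ S ∈ T, ∏ i ∈ S, sgn (x i)) ^ 2 =
      (2 ^ m : ℝ)⁻¹ * T.card := by
  simp only [mul_pow, ← Finset.mul_sum]
  have : ∑ x : Fin m → Bool, (∑ S ∈ T, ∏ i ∈ S, sgn (x i)) ^ 2 = 2 ^ m * (T.card : ℝ) := by
    simp only [sq, Finset.sum_mul_sum]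
    rw [Finset.sum_comm]
    simp_rw [Finset.sum_comm (s := Finset.univ), aux_orth]
    simp [mul_comm]
  rw [this]
  field_simp

lemma aux_diff {m : ℕ} (f g : (Fin m → Bool) → ℝ) (T : Finset (Finset (Fin m))) :
    (∑ S ∈ T, walshCoeff f S) - ∑ S ∈ T, walshCoeff g S =
      ∑ x, ((2 ^ m : ℝ)⁻¹ * ∑ S ∈ T, ∏ i ∈ S, sgn (x i)) * (f x - g x) := by
  simp only [walshCoeff, ← Finset.mul_sum, mul_assoc, ← mul_sub]
  congr 1
  rw [Finset.sum_comm, Finset.sum_comm (s := T), ← Finset.sum_sub_distrib]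
  refine Finset.sum_congr rfl fun x _ => ?_
  rw [← Finset.mul_sum, ← Finset.mul_sum]
  ring

/-- randomized rounding of g : {-1,1}^m → [-1,1] to a Boolean
function g̃ (independently at each point, with E[g̃(x)] = g(x)) preserves sums
of Fourier coefficients: for any nonempty collection T of subsets of [m] and
ε > 0, the probability (of the product measure over outcomes ω, where ω(x)
encodes the sign g̃(x)) that |∑_{S∈T} ĝ̃(S) − ∑_{S∈T} ĝ(S)| ≥ ε is at most
2·exp(−2^{m−1}ε²/|T|). -/
theorem rounding_fourier_sum_concentration (m : ℕ) (hm : 0 < m)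
    (g : (Fin m → Bool) → ℝ) (hg : ∀ x, g x ∈ Set.Icc (-1 : ℝ) 1)
    (T : Finset (Finset (Fin m))) (hT : T.Nonempty) (ε : ℝ) (hε : 0 < ε) :
    ∑ ω ∈ Finset.univ.filter (fun ω : (Fin m → Bool) → Bool =>
        ε ≤ |(∑ S ∈ T, walshCoeff (fun x => sgn (ω x)) S) -
              ∑ S ∈ T, walshCoeff g S|),
      ∏ x : Fin m → Bool, (if ω x then (1 + g x) / 2 else (1 - g x) / 2) ≤
      2 * Real.exp (-((2 : ℝ) ^ (m - 1) * ε ^ 2 / T.card)) := by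
  set c : (Fin m → Bool) → ℝ := fun x => (2 ^ m : ℝ)⁻¹ * ∑ S ∈ T, ∏ i ∈ S, sgn (x i) with hc
  have hV : ∑ x, c x ^ 2 = (2 ^ m : ℝ)⁻¹ * T.card := aux_parseval T
  have hTpos : (0 : ℝ) < T.card := by exact_mod_cast hT.card_pos
  have hw : ∀ ω : (Fin m → Bool) → Bool,
      0 ≤ ∏ x : Fin m → Bool, (if ω x then (1 + g x) / 2 else (1 - g x) / 2) := by
    intro ω
    refine Finset.prod_nonneg fun x _ => ?_
    obtain ⟨h1, h2⟩ := hg x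
    split_ifs <;> linarith
  simp only [aux_diff]
  set w : ((Fin m → Bool) → Bool) → ℝ := fun ω =>
    ∏ x : Fin m → Bool, (if ω x then (1 + g x) / 2 else (1 - g x) / 2) with hwdef
  set D : ((Fin m → Bool) → Bool) → ℝ := fun ω => ∑ x, c x * (sgn (ω x) - g x) with hD
  set t : ℝ := 2 ^ m * ε / T.card with ht
  have htpos : 0 < t := by positivity
  have hA : ∑ ω, w ω * Real.exp (t * D ω) ≤ Real.exp (t ^ 2 * (∑ x, c x ^ 2) / 2) :=
    aux_mgf g c hg t
  have hB : ∑ ω, w ω * Real.exp (-t * D ω) ≤ Real.exp ((-t) ^ 2 * (∑ x, c x ^ 2) / 2) :=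
    aux_mgf g c hg (-t)
  rw [neg_sq] at hB
  have hexp : Real.exp (-(t * ε)) * Real.exp (t ^ 2 * (∑ x, c x ^ 2) / 2) =
      Real.exp (-((2 : ℝ) ^ (m - 1) * ε ^ 2 / T.card)) := by
    rw [← Real.exp_add, hV, ht]
    congr 1
    obtain ⟨k, rfl⟩ : ∃ k, m = k + 1 := ⟨m - 1, by omega⟩
    simp only [Nat.add_sub_cancel, pow_succ (2 : ℝ) k]
    field_simp
    ring
  calc ∑ ω ∈ Finset.univ.filter (fun ω => ε ≤ |D ω|), w ω
      ≤ ∑ ω ∈ Finset.univ.filter (fun ω => ε ≤ |D ω|), Real.exp (-(t * ε)) *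
          (w ω * Real.exp (t * D ω) + w ω * Real.exp (-t * D ω)) := by
        refine Finset.sum_le_sum fun ω hω => ?_
        have hω' : ε ≤ |D ω| := (Finset.mem_filter.mp hω).2
        have h1 : 1 ≤ Real.exp (-(t * ε)) * (Real.exp (t * D ω) + Real.exp (-t * D ω)) := by
          rw [mul_add, ← Real.exp_add, ← Real.exp_add]
          rcases le_abs.mp hω' with h | h
          · have : 1 ≤ Real.exp (-(t * ε) + t * D ω) := Real.one_le_exp (by nlinarith)
            linarith [Real.exp_pos (-(t * ε) + -t * D ω)]
          · have : 1 ≤ Real.exp (-(t * ε) + -t * D ω) := Real.one_le_exp (by nlinarith)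
            linarith [Real.exp_pos (-(t * ε) + t * D ω)]
        have := mul_le_mul_of_nonneg_left h1 (hw ω)
        calc w ω = w ω * 1 := (mul_one _).symm
          _ ≤ _ := this
          _ = _ := by ring
    _ ≤ ∑ ω, Real.exp (-(t * ε)) *
          (w ω * Real.exp (t * D ω) + w ω * Real.exp (-t * D ω)) := by
        refine Finset.sum_le_sum_of_subset_of_nonneg (Finset.filter_subset _ _) fun ω _ _ => ?_
        have := hw ω
        have : 0 ≤ w ω := this
        positivity
    _ ≤ Real.exp (-(t * ε)) * (2 * Real.exp (t ^ 2 * (∑ x, c x ^ 2) / 2)) := by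
        rw [← Finset.mul_sum, Finset.sum_add_distrib]
        exact mul_le_mul_of_nonneg_left (by linarith) (Real.exp_pos _).le
    _ = _ := by rw [← hexp]; ring
end

section
/- There exist constants c > 0, C > 0, and N such that for every odd integer n ≥ N and every real B with √(log n) + C ≤ B ≤ √n, there exists a set F of functions f : {-1,1}^n → {-1,1} with the following properties: (1) F is closed under restriction (for every f ∈ F, i ∈ [n], b ∈ {-1,1}, the function x ↦ f(x with coordinate i set to b) is in F), closed under negation of input variables (for every f ∈ F and σ ∈ {-1,1}^n, the function x ↦ f(σ₁x₁,...,σ_nx_n) is in F), and closed under negation of outputs (for every f ∈ F, −f ∈ F); (2) every f ∈ F satisfies L₁¹(f) = ∑_{i=1}^n |f̂({i})| ≤ B; (3) every f ∈ F satisfies |E_ε[f] − E_0[f]| ≤ C·B·|ε| for all ε with |ε| ≤ min(1/B, 0.99); and (4) some f ∈ F satisfies L₁³(f) = ∑_{|S|=3} |f̂(S)| ≥ c·B·n. -/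
open Finset

lemma sgn_mul_self (b : Bool) : sgn b * sgn b = 1 := by cases b <;> simp [sgn]

lemma sgn_abs (b : Bool) : |sgn b| = 1 := by cases b <;> simp [sgn]

lemma sgn_not (b : Bool) : sgn (!b) = - sgn b := by cases b <;> simp [sgn]

lemma sgn_xor (a b : Bool) : sgn (xor a b) = - (sgn a * sgn b) := by
  cases a <;> cases b <;> simp [sgn]

lemma sum_prod_bool {ι R : Type*} [Fintype ι] [DecidableEq ι] [CommSemiring R]
    (F : ι → Bool → R) :
    ∑ x : ι → Bool, ∏ i, F i (x i) = ∏ i, (F i true + F i false) := by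
  have h := Finset.prod_univ_sum (fun _ : ι => (Finset.univ : Finset Bool)) F
  rw [Fintype.piFinset_univ] at h
  rw [← h]
  simp

lemma exp_le_add_exp_sq (y : ℝ) : Real.exp y ≤ y + Real.exp (y ^ 2) := by
  have h1 := Real.add_one_le_exp (y ^ 2)
  by_cases hy : |y| ≤ 1
  · have h := Real.abs_exp_sub_one_sub_id_le hy
    have := (abs_le.mp h).2
    linarith
  · rcases lt_or_ge y 0 with h0 | h0
    · rw [abs_of_neg h0] at hy
      have : Real.exp y ≤ 1 := Real.exp_le_one_iff.mpr h0.le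
      nlinarith
    · rw [abs_of_nonneg h0] at hy
      have : Real.exp y ≤ Real.exp (y ^ 2) := Real.exp_le_exp.mpr (by nlinarith)
      linarith

lemma two_point (q t : ℝ) (hq : |q| ≤ 1) :
    (1 + sgn true * q) / 2 * Real.exp (t * (sgn true - q)) +
      (1 + sgn false * q) / 2 * Real.exp (t * (sgn false - q)) ≤ Real.exp (4 * t ^ 2) := by
  obtain ⟨h1, h2⟩ := abs_le.mp hq
  simp only [sgn, if_true, Bool.false_eq_true, if_false]
  have e1 := exp_le_add_exp_sq (t * (1 - q))
  have e2 := exp_le_add_exp_sq (t * (-1 - q))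
  have f1 : Real.exp ((t * (1 - q)) ^ 2) ≤ Real.exp (4 * t ^ 2) := by
    apply Real.exp_le_exp.mpr
    have : (1 - q) ^ 2 ≤ 4 := by nlinarith
    rw [mul_pow]; nlinarith [sq_nonneg t]
  have f2 : Real.exp ((t * (-1 - q)) ^ 2) ≤ Real.exp (4 * t ^ 2) := by
    apply Real.exp_le_exp.mpr
    have : (-1 - q) ^ 2 ≤ 4 := by nlinarith
    rw [mul_pow]; nlinarith [sq_nonneg t]
  have g1 := mul_le_mul_of_nonneg_left (e1.trans (add_le_add_right f1 _))
    (show 0 ≤ (1 + 1 * q) / 2 by linarith)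
  have g2 := mul_le_mul_of_nonneg_left (e2.trans (add_le_add_right f2 _))
    (show 0 ≤ (1 + -1 * q) / 2 by linarith)
  calc _ ≤ _ := add_le_add g1 g2
    _ = _ := by ring

lemma prob_exists {X J : Type*} [Fintype X] [DecidableEq X] [Fintype J]
    (q : X → ℝ) (hq : ∀ x, |q x| ≤ 1) (a : J → X → ℝ) (ha : ∀ j, ∑ x, a j x ^ 2 ≤ 1)
    (K : ℝ) (hK : 0 < K) (hJ : (Fintype.card J : ℝ) < Real.exp (K ^ 2 / 16)) :
    ∃ f : X → Bool, ∀ j, ∑ x, a j x * (sgn (f x) - q x) ≤ K := by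
  by_contra hcon
  push Not at hcon
  set w : (X → Bool) → ℝ := fun f => ∏ x, (1 + sgn (f x) * q x) / 2 with hw
  have hw0 : ∀ f, 0 ≤ w f := by
    intro f
    apply Finset.prod_nonneg
    intro x _
    obtain ⟨h1, h2⟩ := abs_le.mp (hq x)
    cases f x <;> simp [sgn] <;> linarith
  have hw1 : ∑ f, w f = 1 := by
    rw [hw, sum_prod_bool (fun x b => (1 + sgn b * q x) / 2)]
    apply Finset.prod_eq_one
    intro x _
    simp [sgn]; ring
  have key : ∀ j, ∑ f, w f * Real.exp (K / 8 * (∑ x, a j x * (sgn (f x) - q x)))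
      ≤ Real.exp (K ^ 2 / 16) := by
    intro j
    have e : ∀ f : X → Bool, w f * Real.exp (K / 8 * (∑ x, a j x * (sgn (f x) - q x))) =
        ∏ x, ((1 + sgn (f x) * q x) / 2 * Real.exp (K / 8 * a j x * (sgn (f x) - q x))) := by
      intro f
      rw [Finset.prod_mul_distrib, Finset.mul_sum, Real.exp_sum]
      simp only [hw, mul_assoc]
    rw [Finset.sum_congr rfl (fun f _ => e f),
      sum_prod_bool (fun x b => (1 + sgn b * q x) / 2 * Real.exp (K / 8 * a j x * (sgn b - q x)))]
    calc _ ≤ ∏ x, Real.exp (4 * (K / 8 * a j x) ^ 2) := by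
          apply Finset.prod_le_prod
          · intro x _
            obtain ⟨h1, h2⟩ := abs_le.mp (hq x)
            have : 0 ≤ (1 + sgn true * q x) / 2 := by simp [sgn]; linarith
            have : 0 ≤ (1 + sgn false * q x) / 2 := by simp [sgn]; linarith
            positivity
          · intro x _
            exact two_point _ _ (hq x)
      _ = Real.exp (K ^ 2 / 16 * ∑ x, a j x ^ 2) := by
          rw [← Real.exp_sum, Finset.mul_sum]
          congr 1
          apply Finset.sum_congr rfl
          intro x _
          ring
      _ ≤ _ := by
          apply Real.exp_le_exp.mpr
          have := ha j
          nlinarith [sq_nonneg K]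
  have h1 : (1 : ℝ) ≤ ∑ j, ∑ f, w f * Real.exp (K / 8 * (∑ x, a j x * (sgn (f x) - q x)))
      * Real.exp (-(K ^ 2 / 8)) := by
    rw [Finset.sum_comm, ← hw1]
    apply Finset.sum_le_sum
    intro f _
    obtain ⟨j, hj⟩ := hcon f
    have : w f * Real.exp (K / 8 * (∑ x, a j x * (sgn (f x) - q x)))
      * Real.exp (-(K ^ 2 / 8)) ≤ ∑ j, w f * Real.exp (K / 8 * (∑ x, a j x * (sgn (f x) - q x)))
      * Real.exp (-(K ^ 2 / 8)) :=
      Finset.single_le_sum (f := fun j => w f * Real.exp (K / 8 * (∑ x, a j x * (sgn (f x) - q x)))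
      * Real.exp (-(K ^ 2 / 8))) (fun j _ => mul_nonneg (mul_nonneg (hw0 f) (Real.exp_nonneg _)) (Real.exp_nonneg _)) (Finset.mem_univ j)
    refine le_trans ?_ this
    rw [mul_assoc, ← Real.exp_add]
    apply le_mul_of_one_le_right (hw0 f)
    apply Real.one_le_exp
    nlinarith
  have h2 : ∑ j, ∑ f, w f * Real.exp (K / 8 * (∑ x, a j x * (sgn (f x) - q x)))
      * Real.exp (-(K ^ 2 / 8)) ≤ ∑ j : J, Real.exp (K ^ 2 / 16) * Real.exp (-(K ^ 2 / 8)) := by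
    apply Finset.sum_le_sum
    intro j _
    rw [← Finset.sum_mul]
    exact mul_le_mul_of_nonneg_right (key j) (Real.exp_nonneg _)
  rw [Finset.sum_const, ← Real.exp_add, nsmul_eq_mul, Finset.card_univ] at h2
  have h3 : (Fintype.card J : ℝ) * Real.exp (K ^ 2 / 16 + -(K ^ 2 / 8)) <
      Real.exp (K ^ 2 / 16) * Real.exp (K ^ 2 / 16 + -(K ^ 2 / 8)) :=
    mul_lt_mul_of_pos_right hJ (Real.exp_pos _)
  rw [← Real.exp_add] at h3
  have : K ^ 2 / 16 + (K ^ 2 / 16 + -(K ^ 2 / 8)) = 0 := by ring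
  rw [this, Real.exp_zero] at h3
  linarith

noncomputable def chi {n : ℕ} (S : Finset (Fin n)) (x : Fin n → Bool) : ℝ := ∏ i ∈ S, sgn (x i)

noncomputable def eT {n : ℕ} (T : Finset (Fin n)) (k : ℕ) (x : Fin n → Bool) : ℝ :=
  ∑ S ∈ T.powersetCard k, chi S x

def phi {n : ℕ} (T : Finset (Fin n)) (σ x : Fin n → Bool) : Fin n → Bool :=
  fun i => if i ∈ T then xor (σ i) (x i) else σ i

lemma chi_orth {n : ℕ} (S S' : Finset (Fin n)) :
    ∑ x : Fin n → Bool, chi S x * chi S' x = if S = S' then 2 ^ n else 0 := by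
  have e : ∀ x : Fin n → Bool, chi S x * chi S' x =
      ∏ i, ((if i ∈ S then sgn (x i) else 1) * (if i ∈ S' then sgn (x i) else 1)) := by
    intro x
    rw [Finset.prod_mul_distrib]
    simp [chi, Finset.prod_ite_mem]
  rw [Finset.sum_congr rfl (fun x _ => e x),
    sum_prod_bool (fun i b => (if i ∈ S then sgn b else 1) * (if i ∈ S' then sgn b else 1))]
  split_ifs with h
  · subst h
    rw [Finset.prod_congr rfl (g := fun _ => (2 : ℝ))]
    · simp
    · intro i _
      split_ifs <;> simp [sgn] <;> norm_num
  · have : ∃ i, ¬ (i ∈ S ↔ i ∈ S') := by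
      by_contra hc
      push Not at hc
      exact h (Finset.ext hc)
    obtain ⟨i, hi⟩ := this
    apply Finset.prod_eq_zero (Finset.mem_univ i)
    by_cases h1 : i ∈ S <;> by_cases h2 : i ∈ S' <;> simp_all [sgn]

lemma eT_sq {n : ℕ} (T : Finset (Fin n)) (k : ℕ) :
    ∑ x : Fin n → Bool, eT T k x ^ 2 = 2 ^ n * (T.card.choose k : ℝ) := by
  simp only [eT, sq, Finset.sum_mul_sum]
  rw [Finset.sum_comm]
  have : ∀ S ∈ T.powersetCard k, ∑ x : Fin n → Bool, ∑ S' ∈ T.powersetCard k, chi S x * chi S' x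
      = 2 ^ n := by
    intro S hS
    rw [Finset.sum_comm]
    simp only [chi_orth]
    simp only [Finset.sum_ite_eq, hS, if_true]
  rw [Finset.sum_congr rfl this]
  simp [mul_comm]

lemma fiber_card {n : ℕ} (T : Finset (Fin n)) (σ y : Fin n → Bool) :
    (Finset.univ.filter (fun x => phi T σ x = y)).card ≤ 2 ^ (n - T.card) := by
  have h : (Finset.univ.filter (fun x => phi T σ x = y)).card ≤
      (Finset.univ : Finset ((↥(Tᶜ : Finset (Fin n))) → Bool)).card := by
    apply Finset.card_le_card_of_injOn (fun x i => x i.1)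
    · intro x _; simp
    · intro x hx x' hx' hxx
      simp only [Finset.coe_filter, Finset.mem_univ, true_and, Set.mem_ofPred_eq] at hx hx'
      funext i
      by_cases hi : i ∈ T
      · have h1 := congrFun (hx.trans hx'.symm) i
        simpa [phi, hi] using h1
      · exact congrFun hxx ⟨i, by simpa using hi⟩
  refine h.trans ?_
  rw [Finset.card_univ, Fintype.card_fun, Fintype.card_bool, Fintype.card_coe, Finset.card_compl,
    Fintype.card_fin]

noncomputable def push {n : ℕ} (T : Finset (Fin n)) (σ : Fin n → Bool)
    (u : (Fin n → Bool) → ℝ) (y : Fin n → Bool) : ℝ :=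
  (2 ^ n : ℝ)⁻¹ * ∑ x ∈ Finset.univ.filter (fun x => phi T σ x = y), u x

lemma push_sum {n : ℕ} (T : Finset (Fin n)) (σ : Fin n → Bool)
    (u g : (Fin n → Bool) → ℝ) :
    ∑ y, push T σ u y * g y = (2 ^ n : ℝ)⁻¹ * ∑ x, g (phi T σ x) * u x := by
  simp only [push, mul_assoc, ← Finset.mul_sum]
  congr 1
  rw [← Finset.sum_fiberwise Finset.univ (phi T σ) (fun x => g (phi T σ x) * u x)]
  apply Finset.sum_congr rfl
  intro y _
  rw [Finset.sum_mul]
  apply Finset.sum_congr rfl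
  intro x hx
  rw [(Finset.mem_filter.mp hx).2, mul_comm]

lemma push_sq {n : ℕ} (T : Finset (Fin n)) (σ : Fin n → Bool)
    (u : (Fin n → Bool) → ℝ) :
    ∑ y, push T σ u y ^ 2 ≤ (2 ^ n : ℝ)⁻¹ * (2 ^ T.card : ℝ)⁻¹ * ∑ x, u x ^ 2 := by
  have hm : T.card ≤ n := by simpa using Finset.card_le_univ T
  have h1 : ∀ y, push T σ u y ^ 2 ≤ (2 ^ n : ℝ)⁻¹ * (2 ^ T.card : ℝ)⁻¹ *
      ∑ x ∈ Finset.univ.filter (fun x => phi T σ x = y), u x ^ 2 := by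
    intro y
    have hc := sq_sum_le_card_mul_sum_sq (s := Finset.univ.filter (fun x => phi T σ x = y)) (f := u)
    have hf : ((Finset.univ.filter (fun x => phi T σ x = y)).card : ℝ) ≤ 2 ^ (n - T.card) := by
      exact_mod_cast fiber_card T σ y
    have hp : (2 : ℝ) ^ (n - T.card) = 2 ^ n * (2 ^ T.card)⁻¹ := by
      rw [pow_sub₀ _ (by norm_num) hm]
    rw [hp] at hf
    have h0 : 0 ≤ ∑ x ∈ Finset.univ.filter (fun x => phi T σ x = y), u x ^ 2 :=
      Finset.sum_nonneg (fun _ _ => sq_nonneg _)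
    have h2 := hc.trans (mul_le_mul_of_nonneg_right hf h0)
    have h3 := mul_le_mul_of_nonneg_left h2 (show (0 : ℝ) ≤ ((2 ^ n : ℝ)⁻¹) ^ 2 by positivity)
    rw [push, mul_pow]
    refine h3.trans (le_of_eq ?_)
    field_simp
  calc _ ≤ _ := Finset.sum_le_sum (fun y _ => h1 y)
    _ = _ := by rw [← Finset.mul_sum, Finset.sum_fiberwise]

lemma noise_exists (n : ℕ) (hn : 100 ≤ n) (q : (Fin n → Bool) → ℝ) (hq : ∀ x, |q x| ≤ 1) :
    ∃ f : (Fin n → Bool) → Bool, ∀ (T : Finset (Fin n)) (σ : Fin n → Bool) (k : ℕ), k ≤ n →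
      |(2 ^ n : ℝ)⁻¹ * ∑ x, (sgn (f (phi T σ x)) - q (phi T σ x)) * eT T k x| ≤
        Real.sqrt (48 * n) * Real.sqrt ((2 ^ T.card : ℝ)⁻¹ * (T.card.choose k : ℝ)) := by
  have hn0 : (0 : ℝ) < n := by exact_mod_cast (by omega : 0 < n)
  let J := Finset (Fin n) × (Fin n → Bool) × Fin (n + 1) × Bool
  have hcard : (Fintype.card J : ℝ) < Real.exp ((Real.sqrt (48 * n)) ^ 2 / 16) := by
    rw [Real.sq_sqrt (by positivity)]
    have h1 : Fintype.card J = 2 ^ n * (2 ^ n * ((n + 1) * 2)) := by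
      simp [J]
    have h2 : (n + 1) * 2 < 2 ^ n * 2 ^ n := by
      have h : n + 1 ≤ 2 ^ n := n.lt_two_pow_self
      have : 2 < 2 ^ n := lt_of_lt_of_le (by norm_num) (Nat.pow_le_pow_right (by norm_num) (show 2 ≤ n by omega))
      nlinarith
    have h3 : Fintype.card J < 16 ^ n := by
      rw [h1, show (16 : ℕ) = 2 * (2 * (2 * 2)) by norm_num, mul_pow, mul_pow, mul_pow]
      gcongr
    have h4 : (16 : ℝ) ^ n ≤ Real.exp (48 * n / 16) := by
      rw [show (48 * n / 16 : ℝ) = n * 3 by ring, Real.exp_nat_mul]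
      apply pow_le_pow_left₀ (by norm_num)
      have := Real.exp_one_gt_d9
      rw [show (3 : ℝ) = (3 : ℕ) * 1 by norm_num, Real.exp_nat_mul]
      calc (16 : ℝ) ≤ 2.7 ^ 3 := by norm_num
        _ ≤ _ := pow_le_pow_left₀ (by norm_num) (by linarith) 3
    calc (Fintype.card J : ℝ) < 16 ^ n := by exact_mod_cast h3
      _ ≤ _ := h4
  obtain ⟨f, hf⟩ := prob_exists (J := J) q hq
    (fun j y => sgn j.2.2.2 * push j.1 j.2.1 (eT j.1 j.2.2.1) y /
      Real.sqrt ((2 ^ j.1.card : ℝ)⁻¹ * (j.1.card.choose j.2.2.1 : ℝ))) (by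
    rintro ⟨T, σ, k, τ⟩
    simp only [div_pow, mul_pow]
    rw [← Finset.sum_div, ← Finset.mul_sum, Real.sq_sqrt (by positivity)]
    have h1 : sgn τ ^ 2 = 1 := by rw [sq, sgn_mul_self]
    rw [h1, one_mul]
    apply div_le_one_of_le₀ _ (by positivity)
    refine (push_sq _ _ _).trans (le_of_eq ?_)
    rw [eT_sq]
    field_simp) (Real.sqrt (48 * n)) (by positivity) hcard
  refine ⟨f, ?_⟩
  intro T σ k hk
  by_cases hz : T.card.choose k = 0
  · have : T.powersetCard k = ∅ := by
      rw [← Finset.card_eq_zero, Finset.card_powersetCard, hz]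
    simp only [eT, this, Finset.sum_empty, mul_zero, Finset.sum_const_zero, abs_zero]
    positivity
  have hpos : 0 < Real.sqrt ((2 ^ T.card : ℝ)⁻¹ * (T.card.choose k : ℝ)) := by
    have : (0 : ℝ) < T.card.choose k := by exact_mod_cast Nat.pos_of_ne_zero hz
    positivity
  have key : ∀ τ : Bool, sgn τ * ((2 ^ n : ℝ)⁻¹ * ∑ x, (sgn (f (phi T σ x)) - q (phi T σ x)) * eT T k x) ≤
        Real.sqrt (48 * n) * Real.sqrt ((2 ^ T.card : ℝ)⁻¹ * (T.card.choose k : ℝ)) := by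
    intro τ
    have h := hf (T, σ, ⟨k, by omega⟩, τ)
    rw [← div_le_iff₀ hpos]
    refine le_trans (le_of_eq ?_) h
    rw [← push_sum T σ (eT T k) (fun y => sgn (f y) - q y), Finset.mul_sum, Finset.sum_div]
    apply Finset.sum_congr rfl
    intro y _
    ring
  have k1 := key true
  have k2 := key false
  simp only [sgn, if_true, Bool.false_eq_true, if_false] at k1 k2
  rw [abs_le]
  simp only [sgn]
  constructor <;> linarith

def Dep {n : ℕ} (h : (Fin n → Bool) → ℝ) (T : Finset (Fin n)) : Prop :=
  ∀ i, i ∉ T → ∀ x b, h (Function.update x i b) = h x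

lemma walsh_zero {n : ℕ} (h : (Fin n → Bool) → ℝ) (T S : Finset (Fin n)) (hd : Dep h T)
    (hS : ¬ S ⊆ T) : walshCoeff h S = 0 := by
  obtain ⟨i, hi, hiT⟩ := Finset.not_subset.mp hS
  unfold walshCoeff
  rw [Finset.sum_involution (fun x _ => Function.update x i (!(x i)))]
  · simp
  · intro x _
    rw [hd i hiT, ← Finset.mul_prod_erase S (fun j => sgn (x j)) hi,
      ← Finset.mul_prod_erase S (fun j => sgn (Function.update x i (!(x i)) j)) hi]
    have : ∏ j ∈ S.erase i, sgn (Function.update x i (!(x i)) j) = ∏ j ∈ S.erase i, sgn (x j) := by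
      apply Finset.prod_congr rfl
      intro j hj
      rw [Function.update_of_ne (Finset.ne_of_mem_erase hj)]
    rw [this, Function.update_self, sgn_not]
    ring
  · intro x _ _ he
    have := congrFun he i
    simp at this
  · intro x _; exact Finset.mem_univ _
  · intro x _
    simp

lemma level_sum {n : ℕ} (h : (Fin n → Bool) → ℝ) (T : Finset (Fin n)) (hd : Dep h T) (k : ℕ) :
    ∑ S ∈ (Finset.univ : Finset (Fin n)).powersetCard k, walshCoeff h S =
      (2 ^ n : ℝ)⁻¹ * ∑ x, h x * eT T k x := by
  rw [← Finset.sum_subset (Finset.powersetCard_mono (Finset.subset_univ T))]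
  · simp only [walshCoeff, eT, chi, ← Finset.mul_sum]
    rw [Finset.sum_comm]
    simp only [Finset.mul_sum]
  · intro S hS hS'
    apply walsh_zero h T S hd
    intro hst
    apply hS'
    rw [Finset.mem_powersetCard] at hS ⊢
    exact ⟨hst, hS.2⟩

lemma prod_eT {n : ℕ} (T : Finset (Fin n)) (ε : ℝ) (x : Fin n → Bool) :
    ∏ i ∈ T, (1 + ε * sgn (x i)) = ∑ S ∈ T.powerset, ε ^ S.card * chi S x := by
  rw [Finset.prod_one_add]
  apply Finset.sum_congr rfl
  intro S _
  rw [Finset.prod_mul_distrib, Finset.prod_const, chi]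

lemma prod_eT' {n : ℕ} (T : Finset (Fin n)) (ε : ℝ) (x : Fin n → Bool) :
    ∏ i ∈ T, (1 + ε * sgn (x i)) = ∑ k ∈ Finset.range (T.card + 1), ε ^ k * eT T k x := by
  rw [prod_eT, Finset.sum_powerset]
  apply Finset.sum_congr rfl
  intro k _
  rw [eT, Finset.mul_sum]
  apply Finset.sum_congr rfl
  intro S hS
  rw [(Finset.mem_powersetCard.mp hS).2]

lemma biased_eq {n : ℕ} (h : (Fin n → Bool) → ℝ) (T : Finset (Fin n)) (hd : Dep h T) (ε : ℝ) :
    biasedExp h ε = (2 ^ n : ℝ)⁻¹ * ∑ x, h x * ∏ i ∈ T, (1 + ε * sgn (x i)) := by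
  have aux : ∀ T : Finset (Fin n), (2 ^ n : ℝ)⁻¹ * ∑ x, h x * ∏ i ∈ T, (1 + ε * sgn (x i)) =
      ∑ S ∈ T.powerset, ε ^ S.card * walshCoeff h S := by
    intro T
    simp only [prod_eT, walshCoeff, Finset.mul_sum]
    rw [Finset.sum_comm]
    apply Finset.sum_congr rfl
    intro S _
    apply Finset.sum_congr rfl
    intro x _
    rw [chi]; ring
  have h1 : biasedExp h ε = (2 ^ n : ℝ)⁻¹ * ∑ x, h x * ∏ i, (1 + ε * sgn (x i)) := by
    unfold biasedExp
    rw [Finset.mul_sum]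
    apply Finset.sum_congr rfl
    intro x _
    rw [Finset.prod_div_distrib]
    simp
    ring
  rw [h1, aux, aux]
  symm
  apply Finset.sum_subset (Finset.powerset_mono.mpr (Finset.subset_univ T))
  intro S _ hS
  rw [walsh_zero h T S hd (by simpa using hS), mul_zero]

lemma avg_cs {n : ℕ} (h u : (Fin n → Bool) → ℝ) (p : ℝ) (hp : 0 ≤ p) (hh : ∀ x, |h x| ≤ p) :
    |(2 ^ n : ℝ)⁻¹ * ∑ x, h x * u x| ≤ p * Real.sqrt ((2 ^ n : ℝ)⁻¹ * ∑ x, u x ^ 2) := by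
  apply abs_le_of_sq_le_sq _ (by positivity)
  rw [mul_pow, mul_pow, Real.sq_sqrt (mul_nonneg (by positivity) (Finset.sum_nonneg (fun _ _ => sq_nonneg _)))]
  have h1 := Finset.sum_mul_sq_le_sq_mul_sq Finset.univ h u
  have h2 : ∑ x, h x ^ 2 ≤ 2 ^ n * p ^ 2 := by
    calc _ ≤ ∑ x : Fin n → Bool, p ^ 2 := by
          apply Finset.sum_le_sum
          intro x _
          rw [← sq_abs]
          exact pow_le_pow_left₀ (abs_nonneg _) (hh x) 2
      _ = _ := by simp
  have h0 : 0 ≤ ∑ x, u x ^ 2 := Finset.sum_nonneg (fun _ _ => sq_nonneg _)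
  have h3 := h1.trans (mul_le_mul_of_nonneg_right h2 h0)
  have h4 := mul_le_mul_of_nonneg_left h3 (show (0 : ℝ) ≤ ((2 ^ n : ℝ)⁻¹) ^ 2 by positivity)
  refine h4.trans (le_of_eq ?_)
  field_simp

lemma avg_prod {n : ℕ} (T : Finset (Fin n)) (F : Bool → ℝ) :
    (2 ^ n : ℝ)⁻¹ * ∑ x : Fin n → Bool, ∏ i ∈ T, F (x i) = ((F true + F false) / 2) ^ T.card := by
  have e : ∀ x : Fin n → Bool, ∏ i ∈ T, F (x i) = ∏ i, (if i ∈ T then F (x i) else 1) := by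
    intro x; simp [Finset.prod_ite_mem]
  rw [Finset.sum_congr rfl (fun x _ => e x), sum_prod_bool (fun i b => if i ∈ T then F b else 1)]
  have e2 : ∀ i, ((if i ∈ T then F true else 1) + (if i ∈ T then F false else 1)) =
      2 * (if i ∈ T then (F true + F false) / 2 else 1) := by
    intro i; split_ifs <;> ring
  rw [Finset.prod_congr rfl (fun i _ => e2 i), Finset.prod_mul_distrib, Finset.prod_ite_mem]
  simp [div_pow]

lemma coin_bdd {n : ℕ} (h : (Fin n → Bool) → ℝ) (T : Finset (Fin n)) (hd : Dep h T) (ε : ℝ)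
    (hε : |ε| ≤ 1) (p : ℝ) (hp : 0 ≤ p) (hh : ∀ x, |h x| ≤ p) :
    |biasedExp h ε - biasedExp h 0| ≤ 2 * p * Real.sqrt T.card * |ε| := by
  set P : (Fin n → Bool) → ℝ := fun x => ∏ i ∈ T, (1 + ε * sgn (x i)) with hP
  have hP1 : (2 ^ n : ℝ)⁻¹ * ∑ x, P x = 1 := by
    rw [hP, avg_prod T (fun b => 1 + ε * sgn b)]
    rw [show ((1 + ε * sgn true + (1 + ε * sgn false)) / 2) = 1 by simp [sgn]; ring, one_pow]
  have hP2 : (2 ^ n : ℝ)⁻¹ * ∑ x, P x ^ 2 = (1 + ε ^ 2) ^ T.card := by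
    simp only [hP, ← Finset.prod_pow]
    rw [avg_prod T (fun b => (1 + ε * sgn b) ^ 2)]
    congr 1
    simp [sgn]; ring
  have hone : (2 ^ n : ℝ)⁻¹ * ∑ x : Fin n → Bool, (1 : ℝ) = 1 := by simp
  have hP0 : ∀ x, 0 ≤ P x := by
    intro x
    apply Finset.prod_nonneg
    intro i _
    have : |ε * sgn (x i)| ≤ 1 := by rw [abs_mul, sgn_abs, mul_one]; exact hε
    linarith [(abs_le.mp this).1]
  have hdiff : biasedExp h ε - biasedExp h 0 = (2 ^ n : ℝ)⁻¹ * ∑ x, h x * (P x - 1) := by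
    rw [biased_eq h T hd, biased_eq h T hd, ← mul_sub, ← Finset.sum_sub_distrib]
    congr 1
    apply Finset.sum_congr rfl
    intro x _
    simp [hP]; ring
  rw [hdiff]
  by_cases hm : T.card * ε ^ 2 ≤ 1
  · refine (avg_cs h _ p hp hh).trans ?_
    have e : (2 ^ n : ℝ)⁻¹ * ∑ x, (P x - 1) ^ 2 = (1 + ε ^ 2) ^ T.card - 1 := by
      have : ∀ x, (P x - 1) ^ 2 = P x ^ 2 - (2 * P x - 1) := by intro x; ring
      rw [Finset.sum_congr rfl (fun x _ => this x), Finset.sum_sub_distrib, Finset.sum_sub_distrib,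
        ← Finset.mul_sum, mul_sub, hP2, mul_sub, hone, ← mul_assoc, mul_comm _ (2 : ℝ), mul_assoc, hP1]
      ring
    rw [e]
    have h1 : (1 + ε ^ 2) ^ T.card ≤ Real.exp (T.card * ε ^ 2) := by
      rw [Real.exp_nat_mul]
      apply pow_le_pow_left₀ (by positivity)
      linarith [Real.add_one_le_exp (ε ^ 2)]
    have hnn : 0 ≤ T.card * ε ^ 2 := by positivity
    have h2 := (abs_le.mp (Real.abs_exp_sub_one_sub_id_le (x := T.card * ε ^ 2) (by rwa [abs_of_nonneg hnn]))).2
    have h3 : (1 + ε ^ 2) ^ T.card - 1 ≤ (2 * (Real.sqrt T.card * |ε|)) ^ 2 := by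
      rw [mul_pow, mul_pow, Real.sq_sqrt (by positivity), sq_abs]
      nlinarith
    have h4 := Real.sqrt_le_sqrt h3
    rw [Real.sqrt_sq (by positivity)] at h4
    calc _ ≤ p * (2 * (Real.sqrt T.card * |ε|)) := mul_le_mul_of_nonneg_left h4 hp
      _ = _ := by ring
  · have h1 : 1 ≤ Real.sqrt T.card * |ε| := by
      rw [← Real.sqrt_sq_eq_abs, ← Real.sqrt_mul (by positivity)]
      apply Real.one_le_sqrt.mpr
      linarith
    have h2 : |(2 ^ n : ℝ)⁻¹ * ∑ x, h x * (P x - 1)| ≤ (2 ^ n : ℝ)⁻¹ * ∑ x, p * (P x + 1) := by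
      rw [abs_mul, abs_of_pos (show (0 : ℝ) < (2 ^ n : ℝ)⁻¹ by positivity)]
      apply mul_le_mul_of_nonneg_left _ (by positivity)
      refine (Finset.abs_sum_le_sum_abs _ _).trans ?_
      apply Finset.sum_le_sum
      intro x _
      rw [abs_mul]
      apply mul_le_mul (hh x) _ (abs_nonneg _) hp
      have := hP0 x
      rw [abs_le]; constructor <;> linarith
    refine h2.trans ?_
    rw [← Finset.mul_sum, Finset.sum_add_distrib, mul_left_comm, mul_add, hP1, hone]
    nlinarith

lemma g_exists (n : ℕ) (hn : 1 ≤ n) : ∃ g : (Fin n → Bool) → ℝ, (∀ x, |g x| ≤ 1) ∧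
    |(2 ^ n : ℝ)⁻¹ * ∑ x, g x * eT Finset.univ 3 x| =
      (n.choose 3 : ℝ) * ((1 / Real.sqrt n) ^ 3 / 2) := by
  have hn0 : (0 : ℝ) < n := by exact_mod_cast hn
  set a : ℝ := 1 / Real.sqrt n with ha
  have ha0 : 0 < a := by positivity
  have ha2 : a ^ 2 = 1 / n := by rw [ha, div_pow, Real.sq_sqrt hn0.le, one_pow]
  let Z : (Fin n → Bool) → ℂ := fun x => ∏ j, (1 + Complex.I * ((a * sgn (x j) : ℝ) : ℂ))
  refine ⟨fun x => (Z x).im / 2, ?_, ?_⟩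
  · intro x
    have h1 : ‖Z x‖ ^ 2 ≤ 4 := by
      have : ‖Z x‖ ^ 2 = (1 + 1 / (n : ℝ)) ^ n := by
        simp only [Z, norm_prod, ← Finset.prod_pow]
        rw [Finset.prod_congr rfl (g := fun _ => 1 + 1 / (n : ℝ))]
        · simp
        · intro j _
          rw [← Complex.normSq_eq_norm_sq, Complex.normSq_apply]
          simp
          have := sgn_mul_self (x j)
          rw [← one_div, ← ha2]
          linear_combination a ^ 2 * this
      rw [this]
      have h2 : (1 + 1 / (n : ℝ)) ^ n ≤ Real.exp (n * (1 / n)) := by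
        rw [Real.exp_nat_mul]
        apply pow_le_pow_left₀ (by positivity)
        linarith [Real.add_one_le_exp (1 / (n : ℝ))]
      rw [mul_one_div_cancel hn0.ne'] at h2
      linarith [Real.exp_one_lt_d9]
    have h2 : ‖Z x‖ ≤ 2 := by nlinarith [norm_nonneg (Z x)]
    have h3 := Complex.abs_im_le_norm (Z x)
    rw [abs_div, abs_of_pos (show (0 : ℝ) < 2 by norm_num)]
    linarith
  · have key : ∀ S ∈ (Finset.univ : Finset (Fin n)).powersetCard 3,
        (2 ^ n : ℝ)⁻¹ * ∑ x, (Z x).im / 2 * chi S x = - (a ^ 3 / 2) := by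
      intro S hS
      have hc : S.card = 3 := (Finset.mem_powersetCard.mp hS).2
      have e : ∑ x, Z x * (chi S x : ℂ) = 2 ^ n * (Complex.I * a) ^ 3 := by
        have e1 : ∀ x, Z x * (chi S x : ℂ) = ∏ j, ((1 + Complex.I * ((a * sgn (x j) : ℝ) : ℂ)) *
            (if j ∈ S then (sgn (x j) : ℂ) else 1)) := by
          intro x
          rw [Finset.prod_mul_distrib, Finset.prod_ite_mem]
          simp [Z, chi]
        rw [Finset.sum_congr rfl (fun x _ => e1 x),
          sum_prod_bool (fun j b => (1 + Complex.I * ((a * sgn b : ℝ) : ℂ)) *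
            (if j ∈ S then (sgn b : ℂ) else 1))]
        have e2 : ∀ j, ((1 + Complex.I * ((a * sgn true : ℝ) : ℂ)) *
            (if j ∈ S then (sgn true : ℂ) else 1)) + ((1 + Complex.I * ((a * sgn false : ℝ) : ℂ)) *
            (if j ∈ S then (sgn false : ℂ) else 1)) = 2 * (if j ∈ S then Complex.I * a else 1) := by
          intro j
          split_ifs <;> simp [sgn] <;> ring
        rw [Finset.prod_congr rfl (fun j _ => e2 j), Finset.prod_mul_distrib, Finset.prod_ite_mem]
        simp [hc]
      have e' := congrArg Complex.im e
      rw [Complex.im_sum] at e'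
      have e3 : ((2 : ℂ) ^ n * (Complex.I * a) ^ 3) = ((-(2 ^ n * a ^ 3) : ℝ) : ℂ) * Complex.I := by
        rw [mul_pow, Complex.I_pow_three]
        push_cast
        ring
      rw [e3] at e'
      simp only [Complex.im_mul_ofReal, Complex.mul_I_im, Complex.ofReal_re] at e'
      have : ∑ x, (Z x).im / 2 * chi S x = (∑ x, (Z x).im * chi S x) / 2 := by
        rw [Finset.sum_div]
        apply Finset.sum_congr rfl
        intro x _; ring
      rw [this, e']
      field_simp
    have : (2 ^ n : ℝ)⁻¹ * ∑ x, (Z x).im / 2 * eT Finset.univ 3 x =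
        ∑ S ∈ (Finset.univ : Finset (Fin n)).powersetCard 3, (2 ^ n : ℝ)⁻¹ * ∑ x, (Z x).im / 2 * chi S x := by
      simp only [eT, Finset.mul_sum]
      rw [Finset.sum_comm]
    rw [this, Finset.sum_congr rfl key]
    simp
    left; positivity

lemma num1_nat (n : ℕ) (hn : 100 ≤ n) : 48 * n ^ 4 ≤ 2 ^ n := by
  induction n, hn using Nat.le_induction with
  | base => norm_num
  | succ m hm ih =>
    have : (m + 1) ^ 4 ≤ 2 * m ^ 4 := by
      have h1 : 100 * m ^ 3 ≤ m ^ 4 := by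
        rw [pow_succ m 3, mul_comm]; exact Nat.mul_le_mul_left _ hm
      have h2 : m ^ 2 ≤ m ^ 3 := Nat.pow_le_pow_right (by omega) (by norm_num)
      have h3 : m ≤ m ^ 3 := Nat.le_self_pow (by norm_num) m
      have h4 : 1 ≤ m ^ 3 := Nat.one_le_pow _ _ (by omega)
      nlinarith
    rw [pow_succ 2 m]; omega

lemma num1 (n : ℕ) (hn : 100 ≤ n) :
    Real.sqrt (48 * n) * Real.sqrt ((2 ^ n : ℝ)⁻¹ * (n.choose 3 : ℝ)) ≤ 1 := by
  rw [← Real.sqrt_mul (by positivity)]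
  apply Real.sqrt_le_one.mpr
  have h1 : (n.choose 3 : ℝ) ≤ n ^ 3 := by exact_mod_cast Nat.choose_le_pow n 3
  have h2 : (48 * n ^ 4 : ℝ) ≤ 2 ^ n := by exact_mod_cast num1_nat n hn
  rw [mul_left_comm, inv_mul_le_one₀ (by positivity)]
  nlinarith [(Nat.cast_nonneg n : (0 : ℝ) ≤ n)]

lemma num2 (n m : ℕ) (hn : 1 ≤ n)
    (hm : (Real.sqrt (Real.logb 2 n) + 100) ^ 2 ≤ m) :
    Real.sqrt (48 * n) * Real.sqrt ((2 ^ m : ℝ)⁻¹ * (m : ℝ)) ≤ 1 := by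
  rw [← Real.sqrt_mul (by positivity)]
  apply Real.sqrt_le_one.mpr
  rw [mul_left_comm, inv_mul_le_one₀ (by positivity)]
  have hn1 : (1 : ℝ) ≤ n := by exact_mod_cast hn
  set L := Real.logb 2 n with hL
  have hL0 : 0 ≤ L := Real.logb_nonneg (by norm_num) hn1
  have hs := Real.sq_sqrt hL0
  have hs0 := Real.sqrt_nonneg L
  set s := Real.sqrt L
  set j : ℝ := m - L with hj
  have hj1 : 200 * s + 10000 ≤ j := by nlinarith
  have hnL : (n : ℝ) = (2 : ℝ) ^ L := (Real.rpow_logb (by norm_num) (by norm_num) (by linarith)).symm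
  have h2m : (2 : ℝ) ^ m = n * (2 : ℝ) ^ j := by
    rw [hnL, ← Real.rpow_add (by norm_num), ← Real.rpow_natCast]
    congr 1
    rw [hj]; ring
  have hmj : (m : ℝ) ≤ 2 * j ^ 2 := by
    have : (m : ℝ) = L + j := by rw [hj]; ring
    rw [this, ← hs]; nlinarith
  have h2j : 96 * j ^ 2 ≤ (2 : ℝ) ^ j := by
    rw [Real.rpow_def_of_pos (by norm_num)]
    have hx : 0.69 * j ≤ Real.log 2 * j := by nlinarith [Real.log_two_gt_d9]
    have h1 := Real.pow_div_factorial_le_exp (x := 0.69 * j) (by nlinarith) 3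
    refine le_trans ?_ (h1.trans (Real.exp_le_exp.mpr hx))
    have : ((Nat.factorial 3 : ℕ) : ℝ) = 6 := by norm_num [Nat.factorial]
    rw [this]
    have h3 : j ^ 2 * 10000 ≤ j ^ 2 * j := by
      apply mul_le_mul_of_nonneg_left _ (sq_nonneg j); linarith
    nlinarith
  rw [h2m]
  nlinarith

lemma num3 (n m : ℕ) (hn : 1 ≤ n) (hmn : m ≤ n) (B : ℝ)
    (hB : Real.sqrt (Real.logb 2 n) + 100 ≤ B) (hm : 4 * B ^ 2 < m) :
    (m : ℝ) * (Real.sqrt (48 * n) * Real.sqrt ((2 ^ m : ℝ)⁻¹ * (1 + (B ^ 2)⁻¹) ^ m)) ≤ 1 := by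
  have hn1 : (1 : ℝ) ≤ n := by exact_mod_cast hn
  have hmn' : (m : ℝ) ≤ n := by exact_mod_cast hmn
  have hL0 : 0 ≤ Real.logb 2 n := Real.logb_nonneg (by norm_num) hn1
  have hs := Real.sq_sqrt hL0
  have hs0 := Real.sqrt_nonneg (Real.logb 2 n)
  have hB0 : 100 ≤ B := by linarith
  have hLB : Real.logb 2 n ≤ B ^ 2 := by rw [← hs]; nlinarith
  have hl2 := Real.log_two_gt_d9
  rw [← Real.sqrt_mul (by positivity), ← Real.sqrt_sq (Nat.cast_nonneg m : (0 : ℝ) ≤ m),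
    ← Real.sqrt_mul (by positivity)]
  apply Real.sqrt_le_one.mpr
  set a := Real.exp (m * Real.log 2 / 8) with ha
  have hm4 : (40000 : ℝ) < m := by nlinarith
  have ha1 : 192 ≤ a := by
    have := Real.add_one_le_exp (m * Real.log 2 / 8)
    nlinarith
  have h2m : (2 : ℝ) ^ m = a ^ 8 := by
    rw [ha, ← Real.exp_nat_mul]
    rw [show (((8 : ℕ) : ℝ) * (m * Real.log 2 / 8)) = m * Real.log 2 by push_cast; ring,
      Real.exp_nat_mul, Real.exp_log (by norm_num)]
  have hna : (n : ℝ) ≤ a ^ 2 := by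
    rw [ha, ← Real.exp_nat_mul, ← Real.exp_log (show (0 : ℝ) < n by linarith)]
    apply Real.exp_le_exp.mpr
    rw [Real.logb, div_le_iff₀ (by linarith)] at hLB
    push_cast
    nlinarith
  have hQ : (1 + (B ^ 2)⁻¹) ^ m ≤ a := by
    rw [ha, mul_div_assoc, Real.exp_nat_mul]
    apply pow_le_pow_left₀ (by positivity)
    have h1 : (B ^ 2)⁻¹ ≤ 1 / 10000 := by
      rw [← one_div]
      apply one_div_le_one_div_of_le (by norm_num)
      nlinarith
    have := Real.add_one_le_exp (Real.log 2 / 8)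
    linarith
  have hm2 : (m : ℝ) ^ 2 ≤ (a ^ 2) ^ 2 := pow_le_pow_left₀ (by positivity) (hmn'.trans hna) 2
  have ha0 : 0 < a := Real.exp_pos _
  rw [h2m]
  calc (m : ℝ) ^ 2 * (48 * n * ((a ^ 8)⁻¹ * (1 + (B ^ 2)⁻¹) ^ m))
      ≤ (a ^ 2) ^ 2 * (48 * a ^ 2 * ((a ^ 8)⁻¹ * a)) := by gcongr
    _ = 48 / a := by field_simp
    _ ≤ 1 := by rw [div_le_one ha0]; linarith

lemma phi_dep {n : ℕ} (u : (Fin n → Bool) → ℝ) (T : Finset (Fin n)) (σ : Fin n → Bool) :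
    Dep (fun x => u (phi T σ x)) T := by
  intro i hi x b
  have : phi T σ (Function.update x i b) = phi T σ x := by
    funext k
    by_cases hk : k ∈ T
    · have : k ≠ i := fun h => hi (h ▸ hk)
      simp [phi, hk, this]
    · simp [phi, hk]
  simp only [this]

lemma eT_avg {n : ℕ} (T : Finset (Fin n)) (k : ℕ) :
    (2 ^ n : ℝ)⁻¹ * ∑ x, eT T k x ^ 2 = (T.card.choose k : ℝ) := by
  rw [eT_sq]; field_simp

lemma coin_noise {n : ℕ} (hn : 1 ≤ n) (h : (Fin n → Bool) → ℝ) (T : Finset (Fin n)) (hd : Dep h T)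
    (B : ℝ) (hB : Real.sqrt (Real.logb 2 n) + 100 ≤ B) (hm : 4 * B ^ 2 < (T.card : ℝ))
    (hh : ∀ k ≤ n, |(2 ^ n : ℝ)⁻¹ * ∑ x, h x * eT T k x| ≤
        Real.sqrt (48 * n) * Real.sqrt ((2 ^ T.card : ℝ)⁻¹ * (T.card.choose k : ℝ)))
    (ε : ℝ) (hε : |ε| ≤ 1 / B) :
    |biasedExp h ε - biasedExp h 0| ≤ B * |ε| := by
  have hmn : T.card ≤ n := by simpa using Finset.card_le_univ T
  have hB0 : 0 < B := by linarith [Real.sqrt_nonneg (Real.logb 2 n)]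
  have hexp : ∀ ε : ℝ, biasedExp h ε = ∑ k ∈ Finset.range (T.card + 1),
      ε ^ k * ((2 ^ n : ℝ)⁻¹ * ∑ x, h x * eT T k x) := by
    intro ε
    rw [biased_eq h T hd]
    simp only [prod_eT', Finset.mul_sum]
    rw [Finset.sum_comm]
    apply Finset.sum_congr rfl
    intro k _
    apply Finset.sum_congr rfl
    intro x _
    ring
  have hdiff : biasedExp h ε - biasedExp h 0 = ∑ k ∈ Finset.range T.card,
      ε ^ (k + 1) * ((2 ^ n : ℝ)⁻¹ * ∑ x, h x * eT T (k + 1) x) := by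
    rw [hexp, hexp, Finset.sum_range_succ', Finset.sum_range_succ']
    simp
  set R := Real.sqrt (48 * n) * Real.sqrt ((2 ^ T.card : ℝ)⁻¹ * (1 + (B ^ 2)⁻¹) ^ T.card) with hR
  have hterm : ∀ k ∈ Finset.range T.card,
      |ε ^ (k + 1) * ((2 ^ n : ℝ)⁻¹ * ∑ x, h x * eT T (k + 1) x)| ≤ B * |ε| * R := by
    intro k hk
    have hk' : k + 1 ≤ T.card := by simpa using hk
    have h1 := hh (k + 1) (by omega)
    have hchoose : (T.card.choose (k + 1) : ℝ) ≤ (1 + (B ^ 2)⁻¹) ^ T.card * (B ^ (k + 1)) ^ 2 := by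
      have h2 : ((B ^ 2)⁻¹) ^ (k + 1) * (T.card.choose (k + 1) : ℝ) ≤ (1 + (B ^ 2)⁻¹) ^ T.card := by
        rw [add_comm (1 : ℝ) ((B ^ 2)⁻¹), add_pow]
        have := Finset.single_le_sum (s := Finset.range (T.card + 1))
          (f := fun j => ((B ^ 2)⁻¹) ^ j * 1 ^ (T.card - j) * (T.card.choose j : ℝ))
          (fun j _ => by positivity) (Finset.mem_range.mpr (show k + 1 < T.card + 1 by omega))
        simpa using this
      have h3 := mul_le_mul_of_nonneg_right h2 (show 0 ≤ (B ^ (k + 1)) ^ 2 by positivity)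
      refine le_trans (le_of_eq ?_) h3
      rw [← pow_mul, mul_comm (k + 1) 2, pow_mul, inv_pow]
      field_simp
    have h4 : Real.sqrt ((2 ^ T.card : ℝ)⁻¹ * (T.card.choose (k + 1) : ℝ)) ≤
        Real.sqrt ((2 ^ T.card : ℝ)⁻¹ * (1 + (B ^ 2)⁻¹) ^ T.card) * B ^ (k + 1) := by
      rw [← Real.sqrt_sq (show 0 ≤ B ^ (k + 1) by positivity), ← Real.sqrt_mul (by positivity)]
      apply Real.sqrt_le_sqrt
      rw [mul_assoc]
      exact mul_le_mul_of_nonneg_left hchoose (by positivity)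
    have h5 : |ε| ^ k ≤ (1 / B) ^ k := pow_le_pow_left₀ (abs_nonneg _) hε k
    rw [abs_mul, abs_pow, pow_succ]
    calc |ε| ^ k * |ε| * |(2 ^ n : ℝ)⁻¹ * ∑ x, h x * eT T (k + 1) x|
        ≤ (1 / B) ^ k * |ε| * (Real.sqrt (48 * n) *
          (Real.sqrt ((2 ^ T.card : ℝ)⁻¹ * (1 + (B ^ 2)⁻¹) ^ T.card) * B ^ (k + 1))) := by
          apply mul_le_mul _ (h1.trans (mul_le_mul_of_nonneg_left h4 (Real.sqrt_nonneg _)))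
            (abs_nonneg _) (by positivity)
          exact mul_le_mul_of_nonneg_right h5 (abs_nonneg _)
      _ = B * |ε| * R := by
          rw [hR, one_div, inv_pow, pow_succ B k]
          field_simp
  rw [hdiff]
  refine (Finset.abs_sum_le_sum_abs _ _).trans ((Finset.sum_le_sum hterm).trans ?_)
  rw [Finset.sum_const, Finset.card_range, nsmul_eq_mul]
  have h6 := num3 n T.card hn hmn B hB hm
  rw [← hR] at h6
  calc _ = B * |ε| * (T.card * R) := by ring
    _ ≤ B * |ε| * 1 := mul_le_mul_of_nonneg_left h6 (by positivity)
    _ = _ := mul_one _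

def cls {n : ℕ} (f : (Fin n → Bool) → Bool) : Set ((Fin n → Bool) → ℝ) :=
  {h | ∃ (T : Finset (Fin n)) (σ : Fin n → Bool) (τ : Bool),
    h = fun x => sgn τ * sgn (f (phi T σ x))}

lemma cls_flip {n : ℕ} (f : (Fin n → Bool) → Bool) (h : (Fin n → Bool) → ℝ) (hh : h ∈ cls f)
    (s : Fin n → Bool) : (fun x => h (fun i => xor (s i) (x i))) ∈ cls f := by
  obtain ⟨T, σ, τ, rfl⟩ := hh
  refine ⟨T, fun i => if i ∈ T then xor (σ i) (s i) else σ i, τ, ?_⟩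
  funext x
  have e : phi T σ (fun i => xor (s i) (x i)) =
      phi T (fun i => if i ∈ T then xor (σ i) (s i) else σ i) x := by
    funext i
    by_cases hi : i ∈ T <;> simp [phi, hi]
  simp only [e]

lemma cls_restrict {n : ℕ} (f : (Fin n → Bool) → Bool) (h : (Fin n → Bool) → ℝ) (hh : h ∈ cls f)
    (i : Fin n) (b : Bool) : (fun x => h (Function.update x i b)) ∈ cls f := by
  obtain ⟨T, σ, τ, rfl⟩ := hh
  refine ⟨T.erase i, fun j => if j = i ∧ i ∈ T then xor (σ j) b else σ j, τ, ?_⟩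
  funext x
  have e : phi T σ (Function.update x i b) =
      phi (T.erase i) (fun j => if j = i ∧ i ∈ T then xor (σ j) b else σ j) x := by
    funext j
    by_cases hi : j = i
    · subst hi
      by_cases hj : j ∈ T <;> simp [phi, hj]
    · by_cases hj : j ∈ T <;> simp [phi, hj, hi]
  simp only [e]

lemma cls_neg {n : ℕ} (f : (Fin n → Bool) → Bool) (h : (Fin n → Bool) → ℝ) (hh : h ∈ cls f) :
    (fun x => - h x) ∈ cls f := by
  obtain ⟨T, σ, τ, rfl⟩ := hh
  refine ⟨T, σ, !τ, ?_⟩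
  funext x
  rw [sgn_not]; ring

lemma walsh_flip {n : ℕ} (h : (Fin n → Bool) → ℝ) (s : Fin n → Bool) (i : Fin n) :
    walshCoeff (fun x => h (fun i => xor (s i) (x i))) {i} = - sgn (s i) * walshCoeff h {i} := by
  have hinv : Function.Involutive (fun (x : Fin n → Bool) i => xor (s i) (x i)) := by
    intro x; funext i; simp
  unfold walshCoeff
  rw [← Equiv.sum_comp (hinv.toPerm _), mul_left_comm]
  congr 1
  rw [Finset.mul_sum]
  apply Finset.sum_congr rfl
  intro x _
  have : (fun i => xor (s i) ((hinv.toPerm _ x : Fin n → Bool) i)) = x := hinv x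
  beta_reduce
  rw [this]
  simp only [Finset.prod_singleton]
  have e : (hinv.toPerm _ x : Fin n → Bool) i = xor (s i) (x i) := rfl
  rw [e, sgn_xor]
  ring

lemma cls_level_one {n : ℕ} (f : (Fin n → Bool) → Bool) (B : ℝ)
    (hW : ∀ h ∈ cls f, ∑ i : Fin n, walshCoeff h {i} ≤ B) (h : (Fin n → Bool) → ℝ)
    (hh : h ∈ cls f) : ∑ i : Fin n, |walshCoeff h {i}| ≤ B := by
  have := hW _ (cls_flip f h hh (fun i => decide (0 ≤ - walshCoeff h {i})))
  refine le_trans (le_of_eq ?_) this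
  apply Finset.sum_congr rfl
  intro i _
  rw [walsh_flip]
  by_cases h0 : 0 ≤ - walshCoeff h {i}
  · simp only [h0, decide_true, sgn, if_true]
    rw [abs_of_nonpos (by linarith)]; ring
  · simp only [h0, decide_false, sgn, Bool.false_eq_true, if_false]
    rw [abs_of_nonneg (by linarith)]; ring

lemma biased_add {n : ℕ} (s : ℝ) (h g : (Fin n → Bool) → ℝ) (ε : ℝ) :
    biasedExp (fun x => s * (h x + g x)) ε = s * (biasedExp h ε + biasedExp g ε) := by
  unfold biasedExp
  rw [← Finset.sum_add_distrib, Finset.mul_sum]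
  apply Finset.sum_congr rfl
  intro x _
  ring

/-- there are constants c, C > 0 and N such that for every odd
n ≥ N and every √(log₂ n) + C ≤ B ≤ √n there is a class F of Boolean functions
on n bits, closed under restriction, negation of input variables, and negation
of outputs, with L₁¹(F) ≤ B and a coin theorem C·B·|ε| for |ε| ≤ min(1/B, 0.99),
but with L₁³(F) ≥ c·B·n. -/
theorem exists_class_large_level_three :
    ∃ c : ℝ, 0 < c ∧ ∃ C : ℝ, 0 < C ∧ ∃ N : ℕ,
      ∀ n : ℕ, Odd n → N ≤ n →
        ∀ B : ℝ, Real.sqrt (Real.logb 2 n) + C ≤ B → B ≤ Real.sqrt n →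
          ∃ F : Set ((Fin n → Bool) → ℝ),
            (∀ f ∈ F, ∀ x, f x = 1 ∨ f x = -1) ∧
            (∀ f ∈ F, ∀ i : Fin n, ∀ b : Bool,
              (fun x => f (Function.update x i b)) ∈ F) ∧
            (∀ f ∈ F, ∀ σ : Fin n → Bool,
              (fun x => f (fun i => xor (σ i) (x i))) ∈ F) ∧
            (∀ f ∈ F, (fun x => -f x) ∈ F) ∧
            (∀ f ∈ F, ∑ i : Fin n, |walshCoeff f {i}| ≤ B) ∧
            (∀ f ∈ F, ∀ ε : ℝ, |ε| ≤ min (1 / B) 0.99 →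
              |biasedExp f ε - biasedExp f 0| ≤ C * B * |ε|) ∧
            (∃ f ∈ F, c * B * n ≤
              ∑ S ∈ Finset.univ.filter (fun S : Finset (Fin n) => S.card = 3),
                |walshCoeff f S|) := by
  refine ⟨1 / 200, by norm_num, 100, by norm_num, 100, ?_⟩
  intro n _ hn B hB hBn
  have hn1 : 1 ≤ n := by omega
  have hn0 : (100 : ℝ) ≤ n := by exact_mod_cast hn
  have hB0 : 100 ≤ B := by linarith [Real.sqrt_nonneg (Real.logb 2 n)]
  have hsn : 0 < Real.sqrt n := by positivity
  obtain ⟨g, hg1, hg3⟩ := g_exists n hn1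
  set p : ℝ := (B - 1) / Real.sqrt n with hp
  have hp0 : 0 ≤ p := div_nonneg (by linarith) hsn.le
  have hp1 : p ≤ 1 := by rw [hp, div_le_one hsn]; linarith
  have hpn : p * Real.sqrt n = B - 1 := by rw [hp]; field_simp
  have hpm : ∀ T : Finset (Fin n), p * Real.sqrt T.card ≤ B - 1 := by
    intro T
    rw [← hpn]
    apply mul_le_mul_of_nonneg_left _ hp0
    apply Real.sqrt_le_sqrt
    exact_mod_cast (by simpa using Finset.card_le_univ T : T.card ≤ n)
  set q : (Fin n → Bool) → ℝ := fun x => p * g x with hq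
  have hqp : ∀ x, |q x| ≤ p := by
    intro x
    rw [hq, abs_mul, abs_of_nonneg hp0]
    exact mul_le_of_le_one_right hp0 (hg1 x)
  obtain ⟨f, hf⟩ := noise_exists n hn q (fun x => (hqp x).trans hp1)
  have hsplit : ∀ (T : Finset (Fin n)) (σ : Fin n → Bool) (τ : Bool),
      (fun x => sgn τ * sgn (f (phi T σ x))) = fun x => sgn τ * (q (phi T σ x) +
        (fun y => sgn (f y) - q y) (phi T σ x)) := by
    intro T σ τ; funext x; simp
  refine ⟨cls f, ?_, fun h hh i b => cls_restrict f h hh i b, fun h hh s => cls_flip f h hh s,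
    fun h hh => cls_neg f h hh, cls_level_one f B ?_, ?_, ?_⟩
  · rintro h ⟨T, σ, τ, rfl⟩ x
    cases τ <;> rcases hfx : f (phi T σ x) <;> simp [sgn, hfx]
  · rintro h ⟨T, σ, τ, rfl⟩
    have hd : Dep (fun x => sgn τ * sgn (f (phi T σ x))) T :=
      phi_dep (fun y => sgn τ * sgn (f y)) T σ
    have e := level_sum _ T hd 1
    rw [Finset.powersetCard_one, Finset.sum_map] at e
    simp only [Function.Embedding.coeFn_mk] at e
    rw [e]
    refine le_trans (le_abs_self _) ?_
    by_cases hm : (T.card : ℝ) ≤ B ^ 2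
    · have h1 := avg_cs (fun x => sgn τ * sgn (f (phi T σ x))) (eT T 1) 1 zero_le_one
        (fun x => by rw [abs_mul, sgn_abs, sgn_abs, one_mul])
      rw [eT_avg, Nat.choose_one_right, one_mul] at h1
      refine h1.trans ?_
      rw [← Real.sqrt_sq (show 0 ≤ B by linarith)]
      exact Real.sqrt_le_sqrt hm
    · push Not at hm
      have h1 := avg_cs (fun x => q (phi T σ x)) (eT T 1) p hp0 (fun x => hqp _)
      rw [eT_avg, Nat.choose_one_right] at h1
      have h2 := hf T σ 1 hn1
      rw [Nat.choose_one_right] at h2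
      have h3 := num2 n T.card hn1 (le_trans (pow_le_pow_left₀ (by positivity) hB 2) hm.le)
      have e2 : (2 ^ n : ℝ)⁻¹ * ∑ x, sgn τ * sgn (f (phi T σ x)) * eT T 1 x = sgn τ *
          ((2 ^ n : ℝ)⁻¹ * ∑ x, q (phi T σ x) * eT T 1 x +
          (2 ^ n : ℝ)⁻¹ * ∑ x, (sgn (f (phi T σ x)) - q (phi T σ x)) * eT T 1 x) := by
        rw [← mul_add, ← Finset.sum_add_distrib, mul_left_comm (sgn τ), Finset.mul_sum _ _ (sgn τ)]
        congr 1
        apply Finset.sum_congr rfl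
        intro x _
        ring
      rw [e2, abs_mul, sgn_abs, one_mul]
      refine (abs_add_le _ _).trans ?_
      have := hpm T
      linarith
  · rintro h ⟨T, σ, τ, rfl⟩ ε hε
    have hε1 : |ε| ≤ 1 / B := hε.trans (min_le_left _ _)
    have hε2 : |ε| ≤ 1 := (hε.trans (min_le_right _ _)).trans (by norm_num)
    have hBε : 0 ≤ B * |ε| := by positivity
    by_cases hm : (T.card : ℝ) ≤ 4 * B ^ 2
    · have hd : Dep (fun x => sgn τ * sgn (f (phi T σ x))) T :=
        phi_dep (fun y => sgn τ * sgn (f y)) T σ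
      have h1 := coin_bdd _ T hd ε hε2 1 zero_le_one
        (fun x => by rw [abs_mul, sgn_abs, sgn_abs, one_mul])
      refine h1.trans ?_
      have h2 : Real.sqrt T.card ≤ 2 * B := by
        rw [← Real.sqrt_sq (show 0 ≤ 2 * B by linarith)]
        apply Real.sqrt_le_sqrt
        linarith
      nlinarith [abs_nonneg ε]
    · push Not at hm
      have h1 := coin_bdd (fun x => q (phi T σ x)) T (phi_dep q T σ) ε hε2 p hp0 (fun x => hqp _)
      have h2 := coin_noise hn1 (fun x => (fun y => sgn (f y) - q y) (phi T σ x)) T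
        (phi_dep (fun y => sgn (f y) - q y) T σ) B hB hm (fun k hk => hf T σ k hk) ε hε1
      rw [hsplit, biased_add, biased_add, ← mul_sub, abs_mul, sgn_abs, one_mul, add_sub_add_comm]
      refine (abs_add_le _ _).trans ?_
      have h3 := mul_le_mul_of_nonneg_right (hpm T) (abs_nonneg ε)
      nlinarith [abs_nonneg ε]
  · have hphi : ∀ x : Fin n → Bool, phi Finset.univ (fun _ => false) x = x := by
      intro x; funext i; simp [phi]
    have hd : Dep (fun x => sgn (f x)) Finset.univ := by
      intro i hi; exact absurd (Finset.mem_univ i) hi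
    refine ⟨fun x => sgn (f x), ⟨Finset.univ, fun _ => false, true, ?_⟩, ?_⟩
    · funext x
      rw [hphi]; simp [sgn]
    have e := level_sum _ Finset.univ hd 3
    have hfil : Finset.univ.filter (fun S : Finset (Fin n) => S.card = 3) =
        (Finset.univ : Finset (Fin n)).powersetCard 3 := by
      ext S; simp [Finset.mem_powersetCard]
    rw [hfil]
    refine le_trans ?_ (Finset.abs_sum_le_sum_abs _ _)
    rw [e]
    have h2 := hf Finset.univ (fun _ => false) 3 (by omega)
    simp only [hphi, Finset.card_univ, Fintype.card_fin] at h2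
    have h3 := h2.trans (num1 n hn)
    have e2 : (2 ^ n : ℝ)⁻¹ * ∑ x, sgn (f x) * eT Finset.univ 3 x =
        p * ((2 ^ n : ℝ)⁻¹ * ∑ x, g x * eT Finset.univ 3 x) +
        (2 ^ n : ℝ)⁻¹ * ∑ x, (sgn (f x) - q x) * eT Finset.univ 3 x := by
      rw [mul_left_comm p, ← mul_add, Finset.mul_sum _ _ p, ← Finset.sum_add_distrib]
      congr 1
      apply Finset.sum_congr rfl
      intro x _
      simp only [hq]
      ring
    rw [e2]
    set u := (2 ^ n : ℝ)⁻¹ * ∑ x, g x * eT Finset.univ 3 x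
    set v := (2 ^ n : ℝ)⁻¹ * ∑ x, (sgn (f x) - q x) * eT Finset.univ 3 x
    have h4 : p * |u| - 1 ≤ |p * u + v| := by
      have := abs_sub_abs_le_abs_sub (p * u) (-v)
      rw [abs_neg, sub_neg_eq_add, abs_mul, abs_of_nonneg hp0] at this
      linarith
    refine le_trans ?_ h4
    rw [hg3]
    have hc : (n : ℝ) ^ 3 / 24 ≤ (n.choose 3 : ℝ) := by
      have h6 : (n.choose 3) * 6 = n * (n - 1) * (n - 2) := by
        have := Nat.descFactorial_eq_factorial_mul_choose n 3
        simp [Nat.descFactorial, Nat.factorial] at this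
        rw [mul_comm, ← this]; ring
      have h7 : (n.choose 3 : ℝ) * 6 = n * (n - 1) * (n - 2) := by
        have := congrArg (Nat.cast : ℕ → ℝ) h6
        push_cast [Nat.cast_sub (show 1 ≤ n by omega), Nat.cast_sub (show 2 ≤ n by omega)] at this
        exact this
      nlinarith
    have e3 : p * ((n.choose 3 : ℝ) * ((1 / Real.sqrt n) ^ 3 / 2)) =
        (B - 1) * (n.choose 3 : ℝ) / (2 * (n : ℝ) ^ 2) := by
      have : (n : ℝ) ^ 2 = Real.sqrt n ^ 4 := by
        rw [show Real.sqrt n ^ 4 = (Real.sqrt n ^ 2) ^ 2 by ring, Real.sq_sqrt (by positivity)]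
      rw [this, hp]
      field_simp
    rw [e3]
    have h8 : (B - 1) * ((n : ℝ) ^ 3 / 24) / (2 * (n : ℝ) ^ 2) ≤
        (B - 1) * (n.choose 3 : ℝ) / (2 * (n : ℝ) ^ 2) := by
      have : 0 ≤ B - 1 := by linarith
      gcongr
    have h9 : (B - 1) * ((n : ℝ) ^ 3 / 24) / (2 * (n : ℝ) ^ 2) = (B - 1) * n / 48 := by
      field_simp
      ring
    nlinarith
end
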